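/- arXiv:2101.10494 — 4 statements merged into one kernel-verified Lean document; each statement's English description precedes it below -/
import Mathlib

section
/- (Corollary to Theorem 1) The word problem for the free Cartesian monoid is solvable: the relation =_CM on terms is decidable. -/
/-- Terms of the free (quasi-)Cartesian monoid: constants `I, L, R`,
composition `comp` (written `*` in the paper) and pairing `pair`. -/
inductive Term : Type
  | I : Term
  | L : Term
  | R : Term
  | comp : Term → Term → Term
  | pair : Term → Term → Term
  deriving DecidableEq

open Term

/-- The rewrite rules (1)-(7), indexed by their number. -/
inductive Rule : ℕ → Term → Term → Prop
  | r1 (x y : Term) : Rule 1 (comp L (pair x y)) x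
  | r2 (x y : Term) : Rule 2 (comp R (pair x y)) y
  | r3 (x y z : Term) : Rule 3 (comp (pair x y) z) (pair (comp x z) (comp y z))
  | r4 (x : Term) : Rule 4 (comp I x) x
  | r5 (x : Term) : Rule 5 (comp x I) x
  | r6 (x : Term) : Rule 6 (pair (comp L x) (comp R x)) x
  | r7 : Rule 7 (pair L R) I

/-- The congruence generated by associativity of `comp`. -/
inductive AssocEq : Term → Term → Prop
  | assoc (a b c : Term) : AssocEq (comp (comp a b) c) (comp a (comp b c))
  | refl (a : Term) : AssocEq a a
  | symm {a b : Term} : AssocEq a b → AssocEq b a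
  | trans {a b c : Term} : AssocEq a b → AssocEq b c → AssocEq a c
  | comp_congr {a a' b b' : Term} :
      AssocEq a a' → AssocEq b b' → AssocEq (comp a b) (comp a' b')
  | pair_congr {a a' b b' : Term} :
      AssocEq a a' → AssocEq b b' → AssocEq (pair a b) (pair a' b')

/-- One-step rewriting by a rule whose index lies in `J`,
closed under replacement of subterms (monotone closure). -/
inductive Step (J : Set ℕ) : Term → Term → Prop
  | rule {n : ℕ} {x y : Term} : n ∈ J → Rule n x y → Step J x y
  | comp_left {a a' b : Term} : Step J a a' → Step J (comp a b) (comp a' b)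
  | comp_right {a b b' : Term} : Step J b b' → Step J (comp a b) (comp a b')
  | pair_left {a a' b : Term} : Step J a a' → Step J (pair a b) (pair a' b)
  | pair_right {a b b' : Term} : Step J b b' → Step J (pair a b) (pair a b')

/-- One-step rewriting modulo associativity. -/
def StepA (J : Set ℕ) (a b : Term) : Prop :=
  ∃ a' b', AssocEq a a' ∧ Step J a' b' ∧ AssocEq b' b

/-- Many-step rewriting `↠_J`: the monotone reflexive transitive closure of
one-step rewriting by the rules in `J`, modulo associativity. -/
def Red (J : Set ℕ) (a b : Term) : Prop :=
  ∃ c, Relation.ReflTransGen (StepA J) a c ∧ AssocEq c b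

/-- `a` is in normal form w.r.t. the rules in `J` (modulo associativity). -/
def NF (J : Set ℕ) (a : Term) : Prop := ∀ b, ¬ StepA J a b

/-- Rules (1)-(7). -/
def rules17 : Set ℕ := {n | 1 ≤ n ∧ n ≤ 7}
/-- Rules (1)-(5). -/
def rules15 : Set ℕ := {n | 1 ≤ n ∧ n ≤ 5}
/-- Rules (1)-(4). -/
def rules14 : Set ℕ := {n | 1 ≤ n ∧ n ≤ 4}
/-- Rules (5), (6), (7). -/
def rules567 : Set ℕ := {5, 6, 7}

/-- The congruence `=_CM` generated by the Cartesian monoid axioms (i)-(iv)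
and the monoid axioms for `comp` with unit `I`. -/
inductive CMEq : Term → Term → Prop
  | proj_left (f g : Term) : CMEq (comp L (pair f g)) f
  | proj_right (f g : Term) : CMEq (comp R (pair f g)) g
  | lift (f g h : Term) : CMEq (comp (pair f g) h) (pair (comp f h) (comp g h))
  | surj : CMEq (pair L R) I
  | assoc (a b c : Term) : CMEq (comp (comp a b) c) (comp a (comp b c))
  | one_mul (a : Term) : CMEq (comp I a) a
  | mul_one (a : Term) : CMEq (comp a I) a
  | refl (a : Term) : CMEq a a
  | symm {a b : Term} : CMEq a b → CMEq b a
  | trans {a b c : Term} : CMEq a b → CMEq b c → CMEq a c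
  | comp_congr {a a' b b' : Term} :
      CMEq a a' → CMEq b b' → CMEq (comp a b) (comp a' b')
  | pair_congr {a a' b b' : Term} :
      CMEq a a' → CMEq b b' → CMEq (pair a b) (pair a' b')

/-- The congruence `=_CQ` generated by the axioms (i)-(iii)
and the monoid axioms (no surjectivity `⟨L,R⟩ = I`). -/
inductive CQEq : Term → Term → Prop
  | proj_left (f g : Term) : CQEq (comp L (pair f g)) f
  | proj_right (f g : Term) : CQEq (comp R (pair f g)) g
  | lift (f g h : Term) : CQEq (comp (pair f g) h) (pair (comp f h) (comp g h))
  | assoc (a b c : Term) : CQEq (comp (comp a b) c) (comp a (comp b c))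
  | one_mul (a : Term) : CQEq (comp I a) a
  | mul_one (a : Term) : CQEq (comp a I) a
  | refl (a : Term) : CQEq a a
  | symm {a b : Term} : CQEq a b → CQEq b a
  | trans {a b c : Term} : CQEq a b → CQEq b c → CQEq a c
  | comp_congr {a a' b b' : Term} :
      CQEq a a' → CQEq b b' → CQEq (comp a b) (comp a' b')
  | pair_congr {a a' b b' : Term} :
      CQEq a a' → CQEq b b' → CQEq (pair a b) (pair a' b')

/-- An injective numerical encoding of terms, used to state computability. -/
def encodeTerm : Term → ℕ
  | I => 0
  | L => 1
  | R => 2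
  | comp a b => 2 * Nat.pair (encodeTerm a) (encodeTerm b) + 3
  | pair a b => 2 * Nat.pair (encodeTerm a) (encodeTerm b) + 4

/-- A numerical encoding of finite lists of terms. -/
def encodeTermList : List Term → ℕ
  | [] => 0
  | a :: l => Nat.pair (encodeTerm a) (encodeTermList l) + 1

/-- The product of a list of terms (with `I` as the empty product). -/
def listProd : List Term → Term
  | [] => I
  | a :: l => comp a (listProd l)

/-- `=_CQ` as a setoid. -/
def cqSetoid : Setoid Term :=
  ⟨CQEq, ⟨fun a => CQEq.refl a, fun h => h.symm, fun h₁ h₂ => h₁.trans h₂⟩⟩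

/-- The free categorical quasiproduct monoid `CQ = T / =_CQ`. -/
def CQ : Type := Quotient cqSetoid

/-- `=_CM` as a setoid. -/
def cmSetoid : Setoid Term :=
  ⟨CMEq, ⟨fun a => CMEq.refl a, fun h => h.symm, fun h₁ h₂ => h₁.trans h₂⟩⟩

/-- The free Cartesian monoid `CM = T / =_CM`. -/
def CM : Type := Quotient cmSetoid

/-- The submonoid of `CQ` generated by (the classes of) the members of `B`,
as a set of elements of `CQ`. -/
def genSubmonoidCQ (B : List Term) : Set CQ :=
  {x | ∃ l : List Term, (∀ t ∈ l, t ∈ B) ∧ Quotient.mk cqSetoid (listProd l) = x}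

/-- The submonoid of `CM` generated by (the classes of) the members of `B`,
as a set of elements of `CM`. -/
def genSubmonoidCM (B : List Term) : Set CM :=
  {x | ∃ l : List Term, (∀ t ∈ l, t ∈ B) ∧ Quotient.mk cmSetoid (listProd l) = x}

/-- A shift: a product (under `comp`) of copies of `L` and `R`,
with `I` as the empty product. -/
inductive IsShift : Term → Prop
  | unit : IsShift I
  | left : IsShift L
  | right : IsShift R
  | comp {s t : Term} : IsShift s → IsShift t → IsShift (comp s t)

/-- The CQ normal form (normal form w.r.t. rules (1)-(5)) of `X` is a shift. -/
def nfIsShift (X : Term) : Prop :=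
  ∃ N, Red rules15 X N ∧ NF rules15 N ∧ IsShift N

/-- The product `F_0 * ⋯ * F_{n-1}` of the first `n` values of a sequence. -/
def prodTake (f : ℕ → Term) (n : ℕ) : Term := listProd ((List.range n).map f)

/-- `B` covers Cantor space: there is an infinite sequence of members of `B`
such that for each shift `S` some finite initial product composed with `S`
has a CQ normal form that is not a shift. -/
def Covers (B : List Term) : Prop :=
  ∃ f : ℕ → Term, (∀ n, f n ∈ B) ∧
    ∀ S, IsShift S → ∃ n, ¬ nfIsShift (comp S (prodTake f n))

/-- The shift `S` is bad for `B`: for every finite sequence of members of `B`,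
the CQ normal form of `S*F_1*⋯*F_n` is a shift. -/
def BadFor (B : List Term) (S : Term) : Prop :=
  ∀ l : List Term, (∀ t ∈ l, t ∈ B) → nfIsShift (comp S (listProd l))

/-- The length of a shift: the number of occurrences of `L` and `R`. -/
def lenLR : Term → ℕ
  | I => 0
  | L => 1
  | R => 1
  | comp a b => lenLR a + lenLR b
  | pair a b => lenLR a + lenLR b

/-- `S` is extenuative for `B`: it is bad for `B` and the CQ normal forms of
`S*F_1*⋯*F_k` (for `F_i` in `B`) have unbounded length. -/
def Extenuative (B : List Term) (S : Term) : Prop :=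
  BadFor B S ∧ ∀ n : ℕ, ∃ l : List Term, (∀ t ∈ l, t ∈ B) ∧
    ∃ N, Red rules15 (comp S (listProd l)) N ∧ NF rules15 N ∧ n ≤ lenLR N

/-- A term represents a right invertible element of CM. -/
def RightInvCM (F : Term) : Prop := ∃ G, CMEq (comp F G) I

namespace WP

def ev : Term → List Bool → List Bool
  | I, w => w
  | L, w => false :: w
  | R, w => true :: w
  | comp a b, w => ev b (ev a w)
  | pair a b, w => if w.headI = true then ev b w.tail else ev a w.tail

def dep : Term → ℕ
  | I => 0
  | L => 0
  | R => 0
  | comp a b => dep a + dep b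
  | pair a b => dep a + dep b + 1

def sz : Term → ℕ
  | I => 1
  | L => 1
  | R => 1
  | comp a b => sz a + sz b + 1
  | pair a b => sz a + sz b + 1

theorem dep_le (t : Term) : dep t ≤ encodeTerm t := by
  induction t with
  | I | L | R => simp [dep]
  | comp a b iha ihb | pair a b iha ihb =>
    simp only [dep, encodeTerm]
    have := Nat.add_le_pair (encodeTerm a) (encodeTerm b)
    omega

theorem sz_le (t : Term) : sz t ≤ encodeTerm t + 1 := by
  induction t with
  | I | L | R => simp [sz]
  | comp a b iha ihb | pair a b iha ihb =>
    simp only [sz, encodeTerm]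
    have := Nat.add_le_pair (encodeTerm a) (encodeTerm b)
    omega

theorem ev_len (t : Term) : ∀ w, dep t ≤ w.length → w.length ≤ (ev t w).length + dep t := by
  induction t with
  | I => intro w _; simp [ev]
  | L => intro w _; simp only [ev, List.length_cons]; omega
  | R => intro w _; simp only [ev, List.length_cons]; omega
  | comp a b iha ihb =>
    intro w h
    simp only [dep, ev] at *
    have h1 := iha w (by omega)
    have h2 := ihb (ev a w) (by omega)
    omega
  | pair a b iha ihb =>
    intro w h
    cases w with
    | nil => simp [dep] at h
    | cons c w =>
      simp only [dep, ev, List.length_cons, List.headI_cons, List.tail_cons] at *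
      have h1 := ihb w (by omega)
      have h2 := iha w (by omega)
      cases c
      · change w.length + 1 ≤ (ev a w).length + (dep a + dep b + 1); omega
      · change w.length + 1 ≤ (ev b w).length + (dep a + dep b + 1); omega

theorem ev_append (t : Term) : ∀ w s, dep t ≤ w.length → ev t (w ++ s) = ev t w ++ s := by
  induction t with
  | I => intro w s _; simp [ev]
  | L => intro w s _; simp [ev]
  | R => intro w s _; simp [ev]
  | comp a b iha ihb =>
    intro w s h
    simp only [dep, ev] at *
    have h1 := ev_len a w (by omega)
    rw [iha w s (by omega), ihb _ s (by omega)]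
  | pair a b iha ihb =>
    intro w s h
    cases w with
    | nil => simp [dep] at h
    | cons c w =>
      simp only [dep, ev, List.length_cons, List.headI_cons, List.tail_cons, List.cons_append] at *
      cases c
      · exact iha w s (by omega)
      · exact ihb w s (by omega)

theorem sound {a b : Term} (h : CMEq a b) :
    ∃ N, ∀ w : List Bool, N ≤ w.length → ev a w = ev b w := by
  induction h with
  | proj_left f g => exact ⟨0, fun w _ => by simp [ev]⟩
  | proj_right f g => exact ⟨0, fun w _ => by simp [ev]⟩
  | lift f g h =>
    refine ⟨0, fun w _ => ?_⟩
    simp only [ev]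
    split <;> rfl
  | surj =>
    refine ⟨1, fun w hw => ?_⟩
    rcases w with _ | ⟨_ | _, w⟩ <;> simp [ev] at hw ⊢
  | assoc a b c => exact ⟨0, fun w _ => rfl⟩
  | one_mul a => exact ⟨0, fun w _ => rfl⟩
  | mul_one a => exact ⟨0, fun w _ => rfl⟩
  | refl a => exact ⟨0, fun w _ => rfl⟩
  | symm _ ih =>
    obtain ⟨N, h⟩ := ih
    exact ⟨N, fun w hw => (h w hw).symm⟩
  | trans _ _ ih1 ih2 =>
    obtain ⟨N, h⟩ := ih1
    obtain ⟨M, h'⟩ := ih2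
    exact ⟨N + M, fun w hw => (h w (by omega)).trans (h' w (by omega))⟩
  | @comp_congr a a' b b' _ _ ih1 ih2 =>
    obtain ⟨N, h⟩ := ih1
    obtain ⟨M, h'⟩ := ih2
    refine ⟨N + M + dep a, fun w hw => ?_⟩
    have := ev_len a w (by omega)
    simp only [ev]
    rw [h' _ (by omega), h w (by omega)]
  | pair_congr _ _ ih1 ih2 =>
    obtain ⟨N, h⟩ := ih1
    obtain ⟨M, h'⟩ := ih2
    refine ⟨N + M + 1, fun w hw => ?_⟩
    have : w.tail.length = w.length - 1 := by simp
    simp only [ev]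
    rw [h _ (by omega), h' _ (by omega)]

theorem sound' {a b : Term} (h : CMEq a b) (w : List Bool) (ha : dep a ≤ w.length)
    (hb : dep b ≤ w.length) : ev a w = ev b w := by
  obtain ⟨N, h⟩ := sound h
  have := h (w ++ List.replicate N true) (by simp)
  rw [ev_append a w _ ha, ev_append b w _ hb] at this
  exact List.append_cancel_right this

def wt : List Bool → Term
  | [] => I
  | c :: w => comp (wt w) (if c = true then R else L)

theorem wt_ev (t : Term) : ∀ w, dep t ≤ w.length → CMEq (comp (wt w) t) (wt (ev t w)) := by
  induction t with
  | I => intro w _; exact CMEq.mul_one _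
  | L => intro w _; exact CMEq.refl _
  | R => intro w _; exact CMEq.refl _
  | comp a b iha ihb =>
    intro w h
    simp only [dep, ev] at *
    have h1 := ev_len a w (by omega)
    exact (CMEq.assoc _ _ _).symm.trans
      ((CMEq.comp_congr (iha w (by omega)) (CMEq.refl _)).trans (ihb _ (by omega)))
  | pair a b iha ihb =>
    intro w h
    cases w with
    | nil => simp [dep] at h
    | cons c w =>
      simp only [dep, ev, List.length_cons, List.headI_cons, List.tail_cons, wt] at *
      refine (CMEq.assoc _ _ _).trans ?_
      cases c
      · exact (CMEq.comp_congr (CMEq.refl _) (CMEq.proj_left _ _)).trans (iha w (by omega))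
      · exact (CMEq.comp_congr (CMEq.refl _) (CMEq.proj_right _ _)).trans (ihb w (by omega))

theorem split_eq (a : Term) : CMEq a (pair (comp L a) (comp R a)) :=
  (CMEq.one_mul a).symm.trans
    ((CMEq.comp_congr CMEq.surj.symm (CMEq.refl a)).trans (CMEq.lift L R a))

theorem complete (n : ℕ) : ∀ a b : Term,
    (∀ w : List Bool, w.length = n → CMEq (comp (wt w) a) (comp (wt w) b)) → CMEq a b := by
  induction n with
  | zero =>
    intro a b h
    exact (CMEq.one_mul a).symm.trans ((h [] rfl).trans (CMEq.one_mul b))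
  | succ n ih =>
    intro a b h
    refine (split_eq a).trans (CMEq.trans (CMEq.pair_congr ?_ ?_) (split_eq b).symm)
    · exact ih _ _ fun w hw => (CMEq.assoc _ _ _).symm.trans
        ((h (false :: w) (by simp [hw])).trans (CMEq.assoc _ _ _))
    · exact ih _ _ fun w hw => (CMEq.assoc _ _ _).symm.trans
        ((h (true :: w) (by simp [hw])).trans (CMEq.assoc _ _ _))

theorem iff_ev (a b : Term) (n : ℕ) (ha : dep a ≤ n) (hb : dep b ≤ n) :
    CMEq a b ↔ ∀ w : List Bool, w.length = n → ev a w = ev b w := by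
  constructor
  · intro h w hw
    exact sound' h w (by omega) (by omega)
  · intro h
    refine complete n a b fun w hw => ?_
    refine (wt_ev a w (by omega)).trans ?_
    rw [h w hw]
    exact (wt_ev b w (by omega)).symm

/-- One step of a stack machine that evaluates coded terms. -/
def stp (s : List ℕ × List Bool) : List ℕ × List Bool :=
  if s.1.headI = 0 then (s.1.tail, s.2)
  else if s.1.headI = 1 then (s.1.tail, false :: s.2)
  else if s.1.headI = 2 then (s.1.tail, true :: s.2)
  else if s.1.headI % 2 = 1 then
    ((Nat.unpair ((s.1.headI - 3) / 2)).1 :: (Nat.unpair ((s.1.headI - 3) / 2)).2 :: s.1.tail, s.2)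
  else if s.2.headI = true then ((Nat.unpair ((s.1.headI - 4) / 2)).2 :: s.1.tail, s.2.tail)
  else ((Nat.unpair ((s.1.headI - 4) / 2)).1 :: s.1.tail, s.2.tail)

theorem stp_run (t : Term) : ∀ st w, ∃ n ≤ sz t, stp^[n] (encodeTerm t :: st, w) = (st, ev t w) := by
  induction t with
  | I => intro st w; exact ⟨1, le_rfl, by simp [stp, encodeTerm, ev]⟩
  | L => intro st w; exact ⟨1, le_rfl, by simp [stp, encodeTerm, ev]⟩
  | R => intro st w; exact ⟨1, le_rfl, by simp [stp, encodeTerm, ev]⟩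
  | comp a b iha ihb =>
    intro st w
    obtain ⟨n, hn, h⟩ := iha (encodeTerm b :: st) w
    obtain ⟨m, hm, h'⟩ := ihb st (ev a w)
    refine ⟨m + n + 1, by simp only [sz]; omega, ?_⟩
    have e : stp (encodeTerm (comp a b) :: st, w) = (encodeTerm a :: encodeTerm b :: st, w) := by
      have : (2 * Nat.pair (encodeTerm a) (encodeTerm b) + 3) % 2 = 1 := by omega
      simp [stp, encodeTerm, this]
    rw [Function.iterate_succ_apply, e, Function.iterate_add_apply, h, h', ev]
  | pair a b iha ihb =>
    intro st w
    have h2 : (2 * Nat.pair (encodeTerm a) (encodeTerm b) + 4) % 2 = 0 := by omega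
    by_cases hw : w.headI = true
    · obtain ⟨m, hm, h'⟩ := ihb st w.tail
      refine ⟨m + 1, by simp only [sz]; omega, ?_⟩
      have e : stp (encodeTerm (pair a b) :: st, w) = (encodeTerm b :: st, w.tail) := by
        simp [stp, encodeTerm, h2, hw]
      rw [Function.iterate_succ_apply, e, h', ev, if_pos hw]
    · obtain ⟨m, hm, h'⟩ := iha st w.tail
      refine ⟨m + 1, by simp only [sz]; omega, ?_⟩
      have e : stp (encodeTerm (pair a b) :: st, w) = (encodeTerm a :: st, w.tail) := by
        simp [stp, encodeTerm, h2, hw]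
      rw [Function.iterate_succ_apply, e, h', ev, if_neg hw]

theorem stp_nil (n : ℕ) (w : List Bool) : stp^[n] ([], w) = ([], w) :=
  Function.iterate_fixed (by simp [stp]) n

def run (c : ℕ) (w : List Bool) : List Bool := (stp^[c + 1] ([c], w)).2

theorem run_eq (t : Term) (w : List Bool) : run (encodeTerm t) w = ev t w := by
  obtain ⟨n, hn, h⟩ := stp_run t [] w
  have := sz_le t
  obtain ⟨k, hk⟩ := Nat.exists_eq_add_of_le (hn.trans this)
  rw [run, hk, Nat.add_comm, Function.iterate_add_apply, h, stp_nil]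

def words (n : ℕ) : List (List Bool) :=
  Nat.rec [[]] (fun _ l => l.map (List.cons false) ++ l.map (List.cons true)) n

theorem mem_words (n : ℕ) : ∀ w : List Bool, w ∈ words n ↔ w.length = n := by
  induction n with
  | zero => intro w; simp [words]
  | succ n ih =>
    intro w
    have : words (n + 1) = (words n).map (List.cons false) ++ (words n).map (List.cons true) := rfl
    rw [this]
    rcases w with _ | ⟨_ | _, w⟩ <;> simp [ih]

theorem primrec_stp : Primrec stp := by
  have c : Primrec fun s : List ℕ × List Bool => s.1.headI := Primrec.list_headI.comp Primrec.fst
  have st : Primrec fun s : List ℕ × List Bool => s.1.tail := Primrec.list_tail.comp Primrec.fst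
  have hd : Primrec fun s : List ℕ × List Bool => s.2.headI := Primrec.list_headI.comp Primrec.snd
  have tl : Primrec fun s : List ℕ × List Bool => s.2.tail := Primrec.list_tail.comp Primrec.snd
  have up (k : ℕ) : Primrec fun s : List ℕ × List Bool => Nat.unpair ((s.1.headI - k) / 2) :=
    Primrec.unpair.comp (Primrec.nat_div.comp (Primrec.nat_sub.comp c (Primrec.const k))
      (Primrec.const 2))
  have ceq (k : ℕ) : PrimrecPred fun s : List ℕ × List Bool => s.1.headI = k :=
    Primrec.eq.comp c (Primrec.const k)
  refine Primrec.ite (ceq 0) (st.pair Primrec.snd) ?_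
  refine Primrec.ite (ceq 1)
    (st.pair (Primrec.list_cons.comp (Primrec.const false) Primrec.snd)) ?_
  refine Primrec.ite (ceq 2)
    (st.pair (Primrec.list_cons.comp (Primrec.const true) Primrec.snd)) ?_
  refine Primrec.ite (Primrec.eq.comp (Primrec.nat_mod.comp c (Primrec.const 2)) (Primrec.const 1))
    (Primrec.pair (Primrec.list_cons.comp (Primrec.fst.comp (up 3))
      (Primrec.list_cons.comp (Primrec.snd.comp (up 3)) st)) Primrec.snd) ?_
  exact Primrec.ite (Primrec.eq.comp hd (Primrec.const true))
    (Primrec.pair (Primrec.list_cons.comp (Primrec.snd.comp (up 4)) st) tl)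
    (Primrec.pair (Primrec.list_cons.comp (Primrec.fst.comp (up 4)) st) tl)

theorem primrec_run : Primrec₂ run := by
  have : Primrec fun p : ℕ × List Bool => stp^[p.1 + 1] ([p.1], p.2) :=
    Primrec.nat_iterate (Primrec.succ.comp Primrec.fst)
      (Primrec.pair (Primrec.list_cons.comp Primrec.fst (Primrec.const [])) Primrec.snd)
      (primrec_stp.comp₂ Primrec₂.right)
  exact (Primrec.snd.comp this).to₂

theorem primrec_words : Primrec words := by
  have hm (b : Bool) : Primrec fun p : ℕ × List (List Bool) => p.2.map (List.cons b) :=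
    Primrec.list_map Primrec.snd
      (Primrec.list_cons.comp₂ (Primrec₂.const b) Primrec₂.right)
  exact Primrec.nat_rec₁ [[]] (Primrec.list_append.comp (hm false) (hm true)).to₂

def chk (m : ℕ) : Prop :=
  ∀ w ∈ words (m.unpair.1 + m.unpair.2), run m.unpair.1 w = run m.unpair.2 w

theorem primrec_chk : PrimrecPred chk := by
  have hR : PrimrecRel fun (w : List Bool) (m : ℕ) => run m.unpair.1 w = run m.unpair.2 w := by
    have h1 : Primrec fun p : List Bool × ℕ => run p.2.unpair.1 p.1 :=
      primrec_run.comp (Primrec.fst.comp (Primrec.unpair.comp Primrec.snd)) Primrec.fst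
    have h2 : Primrec fun p : List Bool × ℕ => run p.2.unpair.2 p.1 :=
      primrec_run.comp (Primrec.snd.comp (Primrec.unpair.comp Primrec.snd)) Primrec.fst
    exact Primrec.eq.comp h1 h2
  exact hR.forall_mem_list.comp
    (primrec_words.comp (Primrec.nat_add.comp (Primrec.fst.comp Primrec.unpair)
      (Primrec.snd.comp Primrec.unpair))) Primrec.id

end WP

/-- Corollary to Theorem 1: the word problem for the free Cartesian monoid is
solvable, i.e. the relation `=_CM` is decidable. -/
theorem word_problem_CM_decidable :
    ∃ f : ℕ → Bool, Computable f ∧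
      ∀ a b : Term, f (Nat.pair (encodeTerm a) (encodeTerm b)) = true ↔ CMEq a b := by
  classical
  refine ⟨fun m => decide (WP.chk m), ?_, fun a b => ?_⟩
  · exact (WP.primrec_chk.decide).to_comp
  · have ha := WP.dep_le a
    have hb := WP.dep_le b
    rw [WP.iff_ev a b (encodeTerm a + encodeTerm b) (by omega) (by omega)]
    simp only [decide_eq_true_eq, WP.chk, Nat.unpair_pair, WP.mem_words, WP.run_eq]
end

section
/- (Theorem 4) Let B be a finite set of elements of the free categorical quasiproduct monoid CQ. Then it is decidable whether the submonoid of CQ generated by B is infinite. -/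
open Term

/-! ### The partial right action of terms on shift words -/

/-- `act F w = some v` says that the shift `w` composed with `F` is the shift `v`
(words are written with the rightmost letter first); `none` says that it is a pair. -/
def act : Term → List Bool → Option (List Bool)
  | I, w => some w
  | L, w => some (true :: w)
  | R, w => some (false :: w)
  | comp a b, w => (act a w).bind (act b)
  | pair _ _, [] => none
  | pair a _, true :: w => act a w
  | pair _ b, false :: w => act b w

/-- Action of a sequence of terms. -/
def actL : List Term → List Bool → Option (List Bool)
  | [], w => some w
  | a :: l, w => (act a w).bind (actL l)

theorem actL_append (l m : List Term) (w : List Bool) :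
    actL (l ++ m) w = (actL l w).bind (actL m) := by
  induction l generalizing w with
  | nil => simp [actL]
  | cons a l ih =>
    simp only [List.cons_append, actL]
    cases act a w <;> simp [ih]

theorem act_listProd (l : List Term) (w : List Bool) : act (listProd l) w = actL l w := by
  induction l generalizing w with
  | nil => simp [actL, listProd, act]
  | cons a l ih =>
    simp only [listProd, actL, act]
    cases act a w <;> simp [ih]

theorem act_sound {a b : Term} (h : CQEq a b) : act a = act b := by
  induction h with
  | proj_left f g => funext w; simp [act]
  | proj_right f g => funext w; simp [act]
  | lift f g h => funext w; rcases w with _ | ⟨_ | _, w⟩ <;> simp [act]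
  | assoc a b c => funext w; simp [act, Option.bind_assoc]
  | one_mul a => funext w; simp [act]
  | mul_one a =>
    funext w; simp only [act]; cases act a w <;> simp [act]
  | refl a => rfl
  | symm _ ih => exact ih.symm
  | trans _ _ ih1 ih2 => exact ih1.trans ih2
  | comp_congr _ _ ih1 ih2 => funext w; simp [act, ih1, ih2]
  | pair_congr _ _ ih1 ih2 => funext w; rcases w with _ | ⟨_ | _, w⟩ <;> simp [act, ih1, ih2]

theorem act_frame (a : Term) (w v p : List Bool) (h : act a w = some v) :
    act a (w ++ p) = some (v ++ p) := by
  induction a generalizing w v with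
  | I => simp_all [act]
  | L => simp only [act, Option.some.injEq] at h ⊢; subst h; rfl
  | R => simp only [act, Option.some.injEq] at h ⊢; subst h; rfl
  | comp a b iha ihb =>
    simp only [act, Option.bind_eq_some_iff] at h ⊢
    obtain ⟨u, hu, hv⟩ := h
    exact ⟨u ++ p, iha _ _ hu, ihb _ _ hv⟩
  | pair a b iha ihb =>
    rcases w with _ | ⟨_ | _, w⟩
    · simp [act] at h
    · exact ihb _ _ h
    · exact iha _ _ h

theorem actL_frame (l : List Term) (w v p : List Bool) (h : actL l w = some v) :
    actL l (w ++ p) = some (v ++ p) := by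
  induction l generalizing w with
  | nil => simp_all [actL]
  | cons a l ih =>
    simp only [actL, Option.bind_eq_some_iff] at h ⊢
    obtain ⟨u, hu, hv⟩ := h
    exact ⟨u ++ p, act_frame _ _ _ _ hu, ih _ hv⟩

theorem act_bounds (a : Term) : ∃ K C : ℕ,
    (∀ w : List Bool, K ≤ w.length → ∃ v, act a w = some v) ∧
    (∀ w v, act a w = some v → v.length ≤ w.length + C ∧ w.length ≤ v.length + K) := by
  induction a with
  | I => exact ⟨0, 0, by simp [act], by simp [act]⟩
  | L => exact ⟨0, 1, by simp [act], by simp [act]⟩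
  | R => exact ⟨0, 1, by simp [act], by simp [act]⟩
  | comp a b iha ihb =>
    obtain ⟨K, C, h1, h2⟩ := iha
    obtain ⟨K', C', h1', h2'⟩ := ihb
    refine ⟨K + K', C + C', ?_, ?_⟩
    · intro w hw
      obtain ⟨u, hu⟩ := h1 w (by omega)
      have := (h2 w u hu).2
      obtain ⟨v, hv⟩ := h1' u (by omega)
      exact ⟨v, by simp [act, hu, hv]⟩
    · intro w v h
      simp only [act, Option.bind_eq_some_iff] at h
      obtain ⟨u, hu, hv⟩ := h
      have := h2 _ _ hu
      have := h2' _ _ hv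
      omega
  | pair a b iha ihb =>
    obtain ⟨K, C, h1, h2⟩ := iha
    obtain ⟨K', C', h1', h2'⟩ := ihb
    refine ⟨K + K' + 1, C + C', ?_, ?_⟩
    · intro w hw
      rcases w with _ | ⟨_ | _, w⟩
      · simp at hw
      · simp at hw; exact h1' w (by omega)
      · simp at hw; exact h1 w (by omega)
    · intro w v h
      rcases w with _ | ⟨_ | _, w⟩
      · simp [act] at h
      · have := h2' _ _ h; simp; omega
      · have := h2 _ _ h; simp; omega

theorem act_bounds_list (B : List Term) : ∃ K C : ℕ, ∀ a ∈ B,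
    (∀ w : List Bool, K ≤ w.length → ∃ v, act a w = some v) ∧
    (∀ w v, act a w = some v → v.length ≤ w.length + C) := by
  induction B with
  | nil => exact ⟨0, 0, by simp⟩
  | cons a B ih =>
    obtain ⟨K, C, h⟩ := ih
    obtain ⟨K', C', h1, h2⟩ := act_bounds a
    refine ⟨K + K', C + C', ?_⟩
    intro b hb
    rcases List.mem_cons.1 hb with rfl | hb
    · exact ⟨fun w hw => h1 w (by omega), fun w v hv => by have := h2 w v hv; omega⟩
    · obtain ⟨h3, h4⟩ := h b hb
      exact ⟨fun w hw => h3 w (by omega), fun w v hv => by have := h4 w v hv; omega⟩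

/-! ### Pumping certificates give infinite submonoids -/

def Pump (B : List Term) : Prop :=
  ∃ l : List Term, (∀ t ∈ l, t ∈ B) ∧ ∃ w s : List Bool, s ≠ [] ∧
    (actL l w = some (w ++ s) ∨ (actL l w = none ∧ actL l (w ++ s) = some w))

/-- `n`-fold repetition of a list. -/
def rep {α : Type} (l : List α) : ℕ → List α
  | 0 => []
  | n + 1 => l ++ rep l n

theorem rep_mem {α : Type} (l : List α) (n : ℕ) (x : α) (h : x ∈ rep l n) : x ∈ l := by
  induction n with
  | zero => simp [rep] at h
  | succ n ih => simp only [rep, List.mem_append] at h; tauto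

theorem rep_length {α : Type} (l : List α) (n : ℕ) : (rep l n).length = n * l.length := by
  induction n with
  | zero => simp [rep]
  | succ n ih => simp [rep, ih]; ring

theorem rep_comm {α : Type} (l : List α) (n : ℕ) : l ++ rep l n = rep l n ++ l := by
  induction n with
  | zero => simp [rep]
  | succ n ih => simp only [rep, List.append_assoc]; rw [← ih]

theorem pump_infinite (B : List Term) (h : Pump B) : (genSubmonoidCQ B).Infinite := by
  obtain ⟨l, hl, w, s, hs, h⟩ := h
  have hs' : 0 < s.length := List.length_pos_iff.2 hs
  suffices hinj : ∀ m n : ℕ, m < n → actL (rep l m) ≠ actL (rep l n) by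
    refine Set.infinite_of_injective_forall_mem
      (f := fun n : ℕ => (Quotient.mk cqSetoid (listProd (rep l n)) : CQ)) ?_ ?_
    · intro m n hmn
      have h1 : CQEq (listProd (rep l m)) (listProd (rep l n)) := Quotient.exact hmn
      have h2 : actL (rep l m) = actL (rep l n) := by
        funext w
        rw [← act_listProd, ← act_listProd, act_sound h1]
      rcases lt_trichotomy m n with h | h | h
      · exact absurd h2 (hinj _ _ h)
      · exact h
      · exact absurd h2.symm (hinj _ _ h)
    · intro n
      exact ⟨rep l n, fun t ht => hl t (rep_mem _ _ _ ht), rfl⟩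
  rcases h with h | ⟨h1, h2⟩
  · have key : ∀ n, actL (rep l n) w = some (w ++ rep s n) := by
      intro n
      induction n with
      | zero => simp [rep, actL]
      | succ n ih =>
        rw [rep, actL_append, h]
        simp only [Option.bind_some]
        rw [actL_frame _ _ _ _ ih, rep, rep_comm, List.append_assoc]
    intro m n hmn heq
    have := congrFun heq w
    rw [key, key, Option.some.injEq] at this
    have := congrArg List.length this
    simp only [List.length_append, rep_length] at this
    nlinarith
  · have step : ∀ (k n : ℕ), actL (rep l (n + 1)) (w ++ rep s (k + 1)) = actL (rep l n) (w ++ rep s k) := by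
      intro k n
      rw [rep, actL_append, rep, ← List.append_assoc, actL_frame _ _ _ _ h2]
      rfl
    have key : ∀ m d, actL (rep l m) (w ++ rep s m) = some w ∧
        actL (rep l (m + (d + 1))) (w ++ rep s m) = none := by
      intro m d
      induction m with
      | zero => 
        refine ⟨by simp [rep, actL], ?_⟩
        simp [rep, actL_append, h1]
      | succ m ih =>
        refine ⟨by rw [step]; exact ih.1, ?_⟩
        have : m + 1 + (d + 1) = (m + (d + 1)) + 1 := by omega
        rw [this, step]; exact ih.2
    intro m n hmn heq
    obtain ⟨d, rfl⟩ := Nat.exists_eq_add_of_lt hmn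
    have h3 := (key m d).1
    have h4 := (key m d).2
    rw [heq, show m + d + 1 = m + (d + 1) by omega, h4] at h3
    cases h3

/-! ### Finiteness certificates give finite submonoids -/

def FinCert (B : List Term) : Prop :=
  ∃ (N : ℕ) (W : List (List Bool)), (∀ w : List Bool, w.length = N → w ∈ W) ∧
    ∀ w ∈ W, ∀ F ∈ B, ∃ v ∈ W, act F w = some v

/-- The shift with given word (rightmost letter first). -/
def wt : List Bool → Term
  | [] => I
  | true :: w => comp (wt w) L
  | false :: w => comp (wt w) R

theorem act_complete1 (a : Term) (w : List Bool) :
    (∀ v, act a w = some v → CQEq (comp (wt w) a) (wt v)) ∧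
    (act a w = none → CQEq (comp (wt w) a)
      (pair (comp L (comp (wt w) a)) (comp R (comp (wt w) a)))) := by
  induction a generalizing w with
  | I => simp only [act, Option.some.injEq, forall_eq', reduceCtorEq, false_implies, and_true]
         exact CQEq.mul_one _
  | L => simp only [act, Option.some.injEq, forall_eq', reduceCtorEq, false_implies, and_true]
         exact CQEq.refl _
  | R => simp only [act, Option.some.injEq, forall_eq', reduceCtorEq, false_implies, and_true]
         exact CQEq.refl _
  | comp a b iha ihb =>
    obtain ⟨ha1, ha2⟩ := iha w
    rcases hw : act a w with _ | u
    · have h := ha2 hw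
      refine ⟨fun v hv => by simp [act, hw] at hv, fun _ => ?_⟩
      have e : CQEq (comp (wt w) (comp a b)) (comp (comp (wt w) a) b) := (CQEq.assoc _ _ _).symm
      refine e.trans (((h.comp_congr (CQEq.refl b)).trans (CQEq.lift _ _ _)).trans ?_)
      refine CQEq.pair_congr ?_ ?_
      · exact (CQEq.assoc _ _ _).trans ((CQEq.refl _).comp_congr e.symm)
      · exact (CQEq.assoc _ _ _).trans ((CQEq.refl _).comp_congr e.symm)
    · have h := ha1 u hw
      obtain ⟨hb1, hb2⟩ := ihb u
      have e : CQEq (comp (wt w) (comp a b)) (comp (wt u) b) :=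
        (CQEq.assoc _ _ _).symm.trans (h.comp_congr (CQEq.refl b))
      have e2 : act (comp a b) w = act b u := by simp [act, hw]
      rw [e2]
      refine ⟨fun v hv => e.trans (hb1 v hv), fun hv => ?_⟩
      exact (e.trans (hb2 hv)).trans
        (CQEq.pair_congr ((CQEq.refl _).comp_congr e.symm) ((CQEq.refl _).comp_congr e.symm))
  | pair a b iha ihb =>
    rcases w with _ | ⟨_ | _, w⟩
    · refine ⟨fun v hv => by simp [act] at hv, fun _ => ?_⟩
      have e : CQEq (comp (wt []) (pair a b)) (pair a b) := CQEq.one_mul _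
      refine e.trans (CQEq.pair_congr ?_ ?_)
      · exact (((CQEq.refl _).comp_congr e).trans (CQEq.proj_left _ _)).symm
      · exact (((CQEq.refl _).comp_congr e).trans (CQEq.proj_right _ _)).symm
    · obtain ⟨hb1, hb2⟩ := ihb w
      have e : CQEq (comp (wt (false :: w)) (pair a b)) (comp (wt w) b) :=
        (CQEq.assoc _ _ _).trans ((CQEq.refl _).comp_congr (CQEq.proj_right _ _))
      refine ⟨fun v hv => e.trans (hb1 v hv), fun hv => ?_⟩
      exact (e.trans (hb2 hv)).trans
        (CQEq.pair_congr ((CQEq.refl _).comp_congr e.symm) ((CQEq.refl _).comp_congr e.symm))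
    · obtain ⟨hb1, hb2⟩ := iha w
      have e : CQEq (comp (wt (true :: w)) (pair a b)) (comp (wt w) a) :=
        (CQEq.assoc _ _ _).trans ((CQEq.refl _).comp_congr (CQEq.proj_left _ _))
      refine ⟨fun v hv => e.trans (hb1 v hv), fun hv => ?_⟩
      exact (e.trans (hb2 hv)).trans
        (CQEq.pair_congr ((CQEq.refl _).comp_congr e.symm) ((CQEq.refl _).comp_congr e.symm))

theorem wt_append (w p : List Bool) : CQEq (comp (wt p) (wt w)) (wt (w ++ p)) := by
  induction w with
  | nil => exact CQEq.mul_one _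
  | cons t w ih =>
    cases t
    · exact (CQEq.assoc _ _ _).symm.trans (ih.comp_congr (CQEq.refl _))
    · exact (CQEq.assoc _ _ _).symm.trans (ih.comp_congr (CQEq.refl _))

theorem act_complete (N : ℕ) (a b : Term) (hN : ∀ w : List Bool, w.length = N → act a w ≠ none)
    (h : ∀ w : List Bool, w.length ≤ N → act a w = act b w) : CQEq a b := by
  have key : ∀ d (w : List Bool), w.length + d = N → CQEq (comp (wt w) a) (comp (wt w) b) := by
    intro d
    induction d with
    | zero =>
      intro w hw
      rcases hv : act a w with _ | v
      · exact absurd hv (hN w (by omega))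
      · have hv' := hv
        rw [h w (by omega)] at hv'
        exact ((act_complete1 a w).1 v hv).trans ((act_complete1 b w).1 v hv').symm
    | succ d ih =>
      intro w hw
      rcases hv : act a w with _ | v
      · have hv' := hv
        rw [h w (by omega)] at hv'
        refine ((act_complete1 a w).2 hv).trans (CQEq.trans ?_ ((act_complete1 b w).2 hv').symm)
        have hx : ∀ t : Bool, CQEq (comp (wt [t]) (comp (wt w) a)) (comp (wt [t]) (comp (wt w) b)) := by
          intro t
          have e := wt_append w [t]
          have e2 := ih (w ++ [t]) (by simp; omega)
          exact ((CQEq.assoc _ _ _).symm.trans ((e.comp_congr (CQEq.refl _)).trans e2)).trans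
            ((e.symm.comp_congr (CQEq.refl _)).trans (CQEq.assoc _ _ _))
        have hL : CQEq L (wt [true]) := (CQEq.one_mul L).symm
        have hR : CQEq R (wt [false]) := (CQEq.one_mul R).symm
        refine CQEq.pair_congr ?_ ?_
        · exact (hL.comp_congr (CQEq.refl _)).trans ((hx true).trans (hL.symm.comp_congr (CQEq.refl _)))
        · exact (hR.comp_congr (CQEq.refl _)).trans ((hx false).trans (hR.symm.comp_congr (CQEq.refl _)))
      · have hv' := hv
        rw [h w (by omega)] at hv'
        exact ((act_complete1 a w).1 v hv).trans ((act_complete1 b w).1 v hv').symm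
  have := key N [] (by simp)
  exact (CQEq.one_mul a).symm.trans (this.trans (CQEq.one_mul b))

theorem finCert_mem (B : List Term) (W : List (List Bool))
    (hW : ∀ w ∈ W, ∀ F ∈ B, ∃ v ∈ W, act F w = some v) (l : List Term) (hl : ∀ t ∈ l, t ∈ B)
    (w : List Bool) (hw : w ∈ W) : ∃ v ∈ W, actL l w = some v := by
  induction l generalizing w with
  | nil => exact ⟨w, hw, rfl⟩
  | cons a l ih =>
    obtain ⟨u, hu, hau⟩ := hW w hw a (hl a (by simp))
    obtain ⟨v, hv, hav⟩ := ih (fun t ht => hl t (by simp [ht])) u hu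
    exact ⟨v, hv, by simp [actL, hau, hav]⟩

theorem finCert_finite (B : List Term) (h : FinCert B) : (genSubmonoidCQ B).Finite := by
  classical
  obtain ⟨N, W, hN, hW⟩ := h
  obtain ⟨M, hM⟩ : ∃ M, ∀ w ∈ W, w.length ≤ M := by
    refine ⟨(W.map List.length).sum, fun w hw => ?_⟩
    exact List.single_le_sum (by simp) _ (List.mem_map_of_mem hw)
  have finN : {w : List Bool | w.length ≤ N}.Finite := List.finite_length_le Bool N
  have finM : {w : List Bool | w.length ≤ M}.Finite := List.finite_length_le Bool M
  have : Finite {w : List Bool | w.length ≤ N} := finN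
  have : Finite {w : List Bool | w.length ≤ M} := finM
  let P : {w : List Bool | w.length ≤ N} → Option (List Bool) → Prop := fun _ o => ∀ v ∈ o, v.length ≤ M
  let G : Set ({w : List Bool | w.length ≤ N} → Option (List Bool)) :=
    Set.pi Set.univ (fun _ => insert none (some '' {w : List Bool | w.length ≤ M}))
  have finG : G.Finite := Set.Finite.pi' (fun _ => (finM.image _).insert _) |>.subset (by
    intro f hf i; exact hf i (Set.mem_univ _))
  let Φ : CQ → ({w : List Bool | w.length ≤ N} → Option (List Bool)) :=
    fun x w => Quotient.lift (s := cqSetoid) act (fun a b hab => act_sound hab) x w.1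
  have tot : ∀ l : List Term, (∀ t ∈ l, t ∈ B) → ∀ w : List Bool, w.length = N →
      ∃ v, v.length ≤ M ∧ act (listProd l) w = some v := by
    intro l hl w hw
    obtain ⟨v, hv, h⟩ := finCert_mem B W hW l hl w (hN w hw)
    exact ⟨v, hM v hv, by rw [act_listProd, h]⟩
  refine Set.Finite.of_finite_image (f := Φ) (finG.subset ?_) ?_
  · rintro _ ⟨x, ⟨l, hl, rfl⟩, rfl⟩
    rintro ⟨w, hw⟩ -
    change act (listProd l) w ∈ _
    rcases hv : act (listProd l) w with _ | v
    · exact Set.mem_insert _ _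
    · refine Set.mem_insert_of_mem _ ⟨v, ?_, rfl⟩
      have hw' : w.length ≤ N := hw
      obtain ⟨v', hv', hh⟩ := tot l hl (w ++ List.replicate (N - w.length) true) (by simp; omega)
      rw [act_frame _ _ _ _ hv, Option.some.injEq] at hh
      have := congrArg List.length hh
      simp at this
      change v.length ≤ M
      omega
  · rintro _ ⟨l, hl, rfl⟩ _ ⟨m, hm, rfl⟩ heq
    refine Quotient.sound (s := cqSetoid) (act_complete N _ _ ?_ ?_)
    · intro w hw
      obtain ⟨v, _, h⟩ := tot l hl w hw
      simp [h]
    · intro w hw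
      exact congrFun heq ⟨w, hw⟩

/-! ### The dichotomy -/

theorem actL_none_split (l : List Term) (w : List Bool) (h : actL l w = none) :
    ∃ (n : ℕ) (F : Term) (y : List Bool), l[n]? = some F ∧ actL (l.take n) w = some y ∧
      act F y = none := by
  induction l generalizing w with
  | nil => simp [actL] at h
  | cons a l ih =>
    rcases ha : act a w with _ | u
    · exact ⟨0, a, w, by simp, by simp [actL], ha⟩
    · simp only [actL, ha, Option.bind_some] at h
      obtain ⟨n, F, y, h1, h2, h3⟩ := ih u h
      exact ⟨n + 1, F, y, by simpa using h1, by simp [actL, ha, h2], h3⟩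

theorem actL_take_some (l : List Term) (w v : List Bool) (m n : ℕ) (hmn : m ≤ n)
    (h : actL (l.take n) w = some v) : ∃ u, actL (l.take m) w = some u ∧
      actL ((l.take n).drop m) u = some v := by
  have e : l.take n = l.take m ++ (l.take n).drop m := by
    conv_lhs => rw [← List.take_append_drop m (l.take n)]
    rw [List.take_take, min_eq_left hmn]
  rw [e, actL_append, Option.bind_eq_some_iff] at h
  exact h

theorem mem_take_drop (l : List Term) (m n : ℕ) (t : Term) (h : t ∈ (l.take n).drop m) : t ∈ l :=
  List.mem_of_mem_take (List.mem_of_mem_drop h)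

theorem descent (B : List Term) (S : Finset (List Bool))
    (hS : ∀ F ∈ B, ∀ y, act F y = none → y ∈ S) (l : List Term) (hl : ∀ t ∈ l, t ∈ B)
    (s : List Bool) (hs : S.card ≤ s.length) (h : actL l s = none) : Pump B := by
  have h1 : ∀ i, ∃ (n : ℕ) (F : Term) (y : List Bool), l[n]? = some F ∧
      actL (l.take n) (s.take i) = some y ∧ act F y = none := by
    intro i
    apply actL_none_split
    rcases hh : actL l (s.take i) with _ | v
    · rfl
    · have := actL_frame _ _ _ (s.drop i) hh
      rw [List.take_append_drop, h] at this
      cases this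
  choose n F y hF hy hn using h1
  obtain ⟨i, hi, j, hj, hij, hyij⟩ := Finset.exists_ne_map_eq_of_card_lt_of_maps_to
    (s := Finset.range (s.length + 1)) (t := S) (f := y) (by simp; omega)
    (fun i _ => hS (F i) (hl _ (List.mem_of_getElem? (hF i))) _ (hn i))
  wlog hlt : i < j generalizing i j
  · exact this j hj i hi hij.symm hyij.symm (by omega)
  simp only [Finset.mem_range] at hi hj
  set x := (s.take j).drop i with hx
  have hxl : x.length = j - i := by simp [hx]; omega
  have e : s.take j = s.take i ++ x := by
    conv_lhs => rw [← List.take_append_drop i (s.take j)]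
    rw [List.take_take, min_eq_left hlt.le]
  have hxy := actL_frame _ _ _ x (hy i)
  rw [← e] at hxy
  have hyj := hy j
  have hle : n i < n j := by
    by_contra hcon
    rcases Nat.lt_or_eq_of_le (not_lt.1 hcon) with hlt' | heq
    · obtain ⟨u, hu1, hu2⟩ := actL_take_some _ _ _ _ _ hlt'.le hxy
      rw [hyj, Option.some.injEq] at hu1
      subst hu1
      have : (l.take (n i)).drop (n j) = F j :: (l.take (n i)).drop (n j + 1) := by
        rw [List.drop_eq_getElem_cons (by
          have := (List.getElem?_eq_some_iff.1 (hF i)).1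
          simp; omega)]
        congr 1
        rw [List.getElem_take]
        exact (List.getElem?_eq_some_iff.1 (hF j)).2
      rw [this] at hu2
      simp [actL, hn j] at hu2
    · rw [← heq, hyj, Option.some.injEq, ← hyij] at hxy
      have := congrArg List.length hxy
      rw [List.length_append] at this
      omega
  obtain ⟨u, hu1, hu2⟩ := actL_take_some _ _ _ _ _ hle.le hyj
  rw [hxy, Option.some.injEq] at hu1
  subst hu1
  refine ⟨(l.take (n j)).drop (n i), fun t ht => hl t (mem_take_drop _ _ _ _ ht), y i, x, ?_, ?_⟩
  · intro h0
    rw [h0] at hxl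
    simp at hxl
    omega
  · right
    refine ⟨?_, by rw [hu2, hyij]⟩
    have : (l.take (n j)).drop (n i) = F i :: (l.take (n j)).drop (n i + 1) := by
      rw [List.drop_eq_getElem_cons (by
        have := (List.getElem?_eq_some_iff.1 (hF j)).1
        simp; omega)]
      congr 1
      rw [List.getElem_take]
      exact (List.getElem?_eq_some_iff.1 (hF i)).2
    rw [this]
    simp [actL, hn i]

theorem ascent (B : List Term) (K C : ℕ)
    (hB : ∀ a ∈ B, (∀ w : List Bool, K ≤ w.length → ∃ v, act a w = some v) ∧
    (∀ w v, act a w = some v → v.length ≤ w.length + C))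
    (S : Finset (List Bool)) (hS : ∀ y : List Bool, y.length ≤ K + C → y ∈ S)
    (l : List Term) (hl : ∀ t ∈ l, t ∈ B)
    (s z : List Bool) (hz : s.length + S.card < z.length) (h : actL l s = some z) : Pump B := by
  classical
  let p : ℕ → List Bool := fun h => z.drop (z.length - h)
  have hp : ∀ h, h ≤ z.length → (p h).length = h := by
    intro h hh; simp [p]; omega
  let Q : ℕ → ℕ → Prop := fun h n => ∃ y z', actL (l.take n) s = some (y ++ p h) ∧
    actL (l.drop n) y = some z'
  have hQ : ∀ h, ∃ n, Q h n := by
    intro h'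
    refine ⟨l.length, z.take (z.length - h'), z.take (z.length - h'), ?_, ?_⟩
    · rw [List.take_append_drop, List.take_length, h]
    · simp [actL]
  let n : ℕ → ℕ := fun h => Nat.find (hQ h)
  have hn : ∀ h, ∃ y z', actL (l.take (n h)) s = some (y ++ p h) ∧
    actL (l.drop (n h)) y = some z' := fun h => Nat.find_spec (hQ h)
  have hmin : ∀ h m, m < n h → ¬ Q h m := fun h m hm => Nat.find_min (hQ h) hm
  choose y z' hy hz' using hn
  have hylen : ∀ h, s.length < h → h ≤ z.length → y h ∈ S := by
    intro h' hh1 hh2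
    apply hS
    by_contra hlong
    have hph := hp h' hh2
    have hy' := hy h'
    rcases hnz : n h' with _ | m
    · rw [hnz] at hy'
      simp only [List.take_zero, actL, Option.some.injEq] at hy'
      have := congrArg List.length hy'
      simp at this
      omega
    · have hml : m < l.length := by
        by_contra hcon
        refine hmin h' m (by omega) ⟨y h', z' h', ?_, ?_⟩
        · rw [← hy', List.take_of_length_le (by omega), List.take_of_length_le (by omega)]
        · rw [← hz' h', List.drop_eq_nil_of_le (by omega), List.drop_eq_nil_of_le (by omega)]
      rw [hnz, List.take_succ_eq_append_getElem hml, actL_append, Option.bind_eq_some_iff] at hy'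
      obtain ⟨w0, hw0, hF⟩ := hy'
      set F := l[m] with hFdef
      have hFB : F ∈ B := hl _ (List.getElem_mem _)
      have hF' : act F w0 = some (y h' ++ p h') := by
        simp only [actL] at hF
        rcases ha : act F w0 with _ | u
        · simp [ha] at hF
        · simpa [ha] using hF
      have hb := (hB F hFB).2 _ _ hF'
      simp only [List.length_append] at hb
      obtain ⟨v, hv⟩ := (hB F hFB).1 (w0.take (w0.length - h')) (by simp; omega)
      have hv2 := act_frame _ _ _ (w0.drop (w0.length - h')) hv
      rw [List.take_append_drop, hF', Option.some.injEq] at hv2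
      obtain ⟨e1, e2⟩ := List.append_inj' hv2 (by simp [hph]; omega)
      refine hmin h' m (by omega) ⟨w0.take (w0.length - h'), z' h', ?_, ?_⟩
      · rw [e2, List.take_append_drop, hw0]
      · rw [List.drop_eq_getElem_cons hml, actL, ← hFdef, hv, ← e1]
        have := hz' h'
        rw [hnz] at this
        simpa using this
  obtain ⟨i, hi, j, hj, hij, hyij⟩ := Finset.exists_ne_map_eq_of_card_lt_of_maps_to
    (s := Finset.Icc (s.length + 1) z.length) (t := S) (f := y) (by simp; omega)
    (fun i hi => by
      simp only [Finset.coe_Icc, Set.mem_Icc] at hi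
      exact hylen i (by omega) (by omega))
  wlog hlt : i < j generalizing i j
  · exact this j hj i hi hij.symm hyij.symm (by omega)
  simp only [Finset.mem_Icc] at hi hj
  obtain ⟨x, hx⟩ : ∃ x, p j = x ++ p i := by
    refine ⟨(p j).take (j - i), ?_⟩
    conv_lhs => rw [← List.take_append_drop (j - i) (p j)]
    congr 1
    simp only [p, List.drop_drop]
    congr 1
    omega
  have hxl : x.length = j - i := by
    have := congrArg List.length hx
    rw [List.length_append, hp i (by omega), hp j (by omega)] at this
    omega
  have hle : n i ≤ n j := by
    by_contra hcon
    refine hmin i (n j) (by omega) ⟨y j ++ x, z' j ++ x, ?_, ?_⟩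
    · rw [hy j, hx, List.append_assoc]
    · exact actL_frame _ _ _ _ (hz' j)
  obtain ⟨u, hu1, hu2⟩ := actL_take_some _ _ _ _ _ hle (hy j)
  rw [hy i, Option.some.injEq] at hu1
  subst hu1
  have hd : l.drop (n i) = (l.take (n j)).drop (n i) ++ l.drop (n j) := by
    rw [List.drop_take]
    conv_lhs => rw [← List.take_append_drop (n j - n i) (l.drop (n i))]
    rw [List.drop_drop]
    congr 2
    omega
  have hz2 := hz' i
  rw [hd, actL_append, Option.bind_eq_some_iff] at hz2
  obtain ⟨q, hq, -⟩ := hz2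
  have hq2 := actL_frame _ _ _ (p i) hq
  rw [hu2, Option.some.injEq, hx, ← List.append_assoc] at hq2
  have hq3 := List.append_cancel_right hq2
  refine ⟨(l.take (n j)).drop (n i), fun t ht => hl t (mem_take_drop _ _ _ _ ht), y i, x, ?_, ?_⟩
  · intro h0
    rw [h0] at hxl
    simp at hxl
    omega
  · left
    rw [hq, ← hq3, hyij]

theorem dichotomy (B : List Term) : FinCert B ∨ Pump B := by
  classical
  obtain ⟨K, C, hB⟩ := act_bounds_list B
  let S : Finset (List Bool) := (List.finite_length_le Bool (K + C)).toFinset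
  have hS : ∀ y : List Bool, y.length ≤ K + C → y ∈ S := by
    intro y hy; simpa [S] using hy
  by_cases h1 : Pump B
  · exact Or.inr h1
  left
  have hbd : ∀ l : List Term, (∀ t ∈ l, t ∈ B) → ∀ s : List Bool, s.length = S.card →
      ∃ v, actL l s = some v ∧ v.length ≤ S.card + S.card := by
    intro l hl s hs
    rcases hv : actL l s with _ | v
    · refine absurd (descent B S ?_ l hl s hs.ge hv) h1
      intro F hF y hy
      apply hS
      by_contra hcon
      obtain ⟨v, hv⟩ := (hB F hF).1 y (by omega)
      rw [hy] at hv
      cases hv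
    · refine ⟨v, rfl, ?_⟩
      by_contra hcon
      exact h1 (ascent B K C hB S hS l hl s v (by omega) hv)
  let W : Set (List Bool) := {v | ∃ l : List Term, (∀ t ∈ l, t ∈ B) ∧ ∃ s : List Bool,
    s.length = S.card ∧ actL l s = some v}
  have hW : W.Finite := by
    refine (List.finite_length_le Bool (S.card + S.card)).subset ?_
    rintro v ⟨l, hl, s, hs, hv⟩
    obtain ⟨v', h3, h4⟩ := hbd l hl s hs
    rw [hv, Option.some.injEq] at h3
    subst h3
    exact h4
  refine ⟨S.card, hW.toFinset.toList, ?_, ?_⟩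
  · intro w hw
    simp only [Finset.mem_toList, Set.Finite.mem_toFinset]
    exact ⟨[], by simp, w, hw, rfl⟩
  · intro w hw F hF
    simp only [Finset.mem_toList, Set.Finite.mem_toFinset] at hw ⊢
    obtain ⟨l, hl, s, hs, hv⟩ := hw
    have hlF : ∀ t ∈ l ++ [F], t ∈ B := by
      intro t ht
      simp only [List.mem_append, List.mem_singleton] at ht
      rcases ht with ht | rfl
      · exact hl t ht
      · exact hF
    obtain ⟨v, h3, -⟩ := hbd (l ++ [F]) hlF s hs
    refine ⟨v, ⟨l ++ [F], hlF, s, hs, h3⟩, ?_⟩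
    rw [actL_append, hv] at h3
    simp only [Option.bind_some, actL] at h3
    rcases ha : act F w with _ | u
    · simp [ha] at h3
    · simpa [ha] using h3

/-! ### Computability -/

/-- One step of the abstract machine, at a pair. -/
def stepPair (x : (List ℕ × List Bool) × ℕ × List ℕ) (y : Bool × List Bool) :
    List ℕ × List Bool :=
  (bif y.1 then ((x.2.1 - 4) / 2).unpair.1 :: x.2.2 else ((x.2.1 - 4) / 2).unpair.2 :: x.2.2, y.2)

/-- One step of the abstract machine, when there is something left to process. -/
def stepCons (q : List ℕ × List Bool) (x : ℕ × List ℕ) : List ℕ × List Bool :=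
  if x.1 = 0 then (x.2, q.2)
  else if x.1 = 1 then (x.2, true :: q.2)
  else if x.1 = 2 then (x.2, false :: q.2)
  else if x.1 % 2 = 1 then
    (((x.1 - 3) / 2).unpair.1 :: ((x.1 - 3) / 2).unpair.2 :: x.2, q.2)
  else List.casesOn q.2 q fun t w => stepPair (q, x) (t, w)

/-- One step of the abstract machine computing `actL` on codes. -/
def stepM (q : List ℕ × List Bool) : List ℕ × List Bool :=
  List.casesOn q.1 q fun c K => stepCons q (c, K)

theorem stepM_primrec : Primrec stepM := by
  unfold stepM
  refine Primrec.list_casesOn (h := stepCons) Primrec.fst Primrec.id ?_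
  unfold stepCons
  have hc : Primrec (fun x : (List ℕ × List Bool) × ℕ × List ℕ => x.2.1) :=
    Primrec.fst.comp Primrec.snd
  have hK : Primrec (fun x : (List ℕ × List Bool) × ℕ × List ℕ => x.2.2) :=
    Primrec.snd.comp Primrec.snd
  have hw : Primrec (fun x : (List ℕ × List Bool) × ℕ × List ℕ => x.1.2) :=
    Primrec.snd.comp Primrec.fst
  have hu : ∀ d : ℕ, Primrec (fun x : (List ℕ × List Bool) × ℕ × List ℕ => ((x.2.1 - d) / 2).unpair) :=
    fun d => Primrec.unpair.comp (Primrec.nat_div.comp (Primrec.nat_sub.comp hc (Primrec.const d))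
      (Primrec.const 2))
  refine Primrec.ite (Primrec.eq.comp hc (Primrec.const 0)) (Primrec.pair hK hw) ?_
  refine Primrec.ite (Primrec.eq.comp hc (Primrec.const 1))
    (Primrec.pair hK (Primrec.list_cons.comp (Primrec.const true) hw)) ?_
  refine Primrec.ite (Primrec.eq.comp hc (Primrec.const 2))
    (Primrec.pair hK (Primrec.list_cons.comp (Primrec.const false) hw)) ?_
  refine Primrec.ite (Primrec.eq.comp (Primrec.nat_mod.comp hc (Primrec.const 2)) (Primrec.const 1))
    (Primrec.pair (Primrec.list_cons.comp (Primrec.fst.comp (hu 3))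
      (Primrec.list_cons.comp (Primrec.snd.comp (hu 3)) hK)) hw) ?_
  refine Primrec.list_casesOn (h := stepPair) hw Primrec.fst ?_
  unfold stepPair
  refine Primrec.pair ?_ (Primrec.snd.comp Primrec.snd)
  refine Primrec.cond (Primrec.fst.comp Primrec.snd) ?_ ?_
  · exact Primrec.list_cons.comp (Primrec.fst.comp ((hu 4).comp Primrec.fst)) (hK.comp Primrec.fst)
  · exact Primrec.list_cons.comp (Primrec.snd.comp ((hu 4).comp Primrec.fst)) (hK.comp Primrec.fst)

/-- Fuel sufficient for the machine. -/
def fuel (K : List ℕ) : ℕ := K.foldr (fun c n => c + 1 + n) 0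

theorem fuel_primrec : Primrec fuel := by
  unfold fuel
  refine Primrec.list_foldr (f := fun K : List ℕ => K) (g := fun _ => (0 : ℕ))
    (h := fun _ x => x.1 + 1 + x.2) Primrec.id (Primrec.const 0) ?_
  exact Primrec.nat_add.comp (Primrec.succ.comp (Primrec.fst.comp Primrec.snd))
    (Primrec.snd.comp Primrec.snd)

/-- Read off the result of the machine. -/
def outM (q : List ℕ × List Bool) : Option (List Bool) :=
  List.casesOn q.1 (some q.2) fun _ _ => none

theorem outM_primrec : Primrec outM := by
  unfold outM
  exact Primrec.list_casesOn (f := fun q : List ℕ × List Bool => q.1)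
    (h := fun (_ : List ℕ × List Bool) (_ : ℕ × List ℕ) => none) Primrec.fst (Primrec.option_some.comp Primrec.snd)
    (Primrec.const none).to₂

def actN (K : List ℕ) (w : List Bool) : Option (List Bool) :=
  outM (stepM^[fuel K] (K, w))

theorem actN_primrec : Primrec₂ actN := by
  unfold actN
  refine outM_primrec.comp ?_
  exact Primrec.nat_iterate (fuel_primrec.comp Primrec.fst) Primrec.id
    (stepM_primrec.comp Primrec.snd).to₂

theorem iter_fix (q : List ℕ × List Bool) (h : stepM q = q) (n : ℕ) : stepM^[n] q = q :=
  Function.iterate_fixed h n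

theorem machine_correct (n : ℕ) (l : List Term) (w : List Bool)
    (h : fuel (l.map encodeTerm) ≤ n) :
    outM (stepM^[n] (l.map encodeTerm, w)) = actL l w := by
  induction n generalizing l w with
  | zero =>
    cases l with
    | nil => rfl
    | cons a l => simp [fuel] at h
  | succ n ih =>
    cases l with
    | nil => rw [iter_fix _ rfl]; rfl
    | cons a l =>
      have hf : ∀ c K, fuel (c :: K) = c + 1 + fuel K := fun _ _ => rfl
      rw [List.map_cons, hf] at h
      cases a with
      | I =>
        rw [Function.iterate_succ_apply]
        have e : stepM ((I :: l).map encodeTerm, w) = (l.map encodeTerm, w) := by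
          simp [stepM, stepCons, stepPair, encodeTerm]
        rw [e, ih _ _ (by omega)]
        simp [actL, act]
      | L =>
        rw [Function.iterate_succ_apply]
        have e : stepM ((L :: l).map encodeTerm, w) = (l.map encodeTerm, true :: w) := by
          simp [stepM, stepCons, stepPair, encodeTerm]
        rw [e, ih _ _ (by omega)]
        simp [actL, act]
      | R =>
        rw [Function.iterate_succ_apply]
        have e : stepM ((R :: l).map encodeTerm, w) = (l.map encodeTerm, false :: w) := by
          simp [stepM, stepCons, stepPair, encodeTerm]
        rw [e, ih _ _ (by omega)]
        simp [actL, act]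
      | comp a b =>
        rw [Function.iterate_succ_apply]
        have e : stepM ((comp a b :: l).map encodeTerm, w) = ((a :: b :: l).map encodeTerm, w) := by
          have : (2 * Nat.pair (encodeTerm a) (encodeTerm b) + 3) % 2 = 1 := by omega
          simp [stepM, stepCons, stepPair, encodeTerm, this]
        have hadd := Nat.add_le_pair (encodeTerm a) (encodeTerm b)
        simp only [encodeTerm] at h
        rw [e, ih _ _ (by simp only [List.map_cons, hf]; omega)]
        simp only [actL, act]
        cases act a w <;> simp
      | pair a b =>
        have h0 : (2 * Nat.pair (encodeTerm a) (encodeTerm b) + 4) % 2 = 0 := by omega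
        have hadd := Nat.add_le_pair (encodeTerm a) (encodeTerm b)
        simp only [encodeTerm] at h
        rcases w with _ | ⟨t, w⟩
        · rw [iter_fix _ (by simp [stepM, stepCons, stepPair, encodeTerm, h0])]
          simp [outM, actL, act]
        · rw [Function.iterate_succ_apply]
          cases t
          · have e : stepM ((pair a b :: l).map encodeTerm, false :: w) =
                ((b :: l).map encodeTerm, w) := by
              simp [stepM, stepCons, stepPair, encodeTerm, h0]
            rw [e, ih _ _ (by simp only [List.map_cons, hf]; omega)]
            simp [actL, act]
          · have e : stepM ((pair a b :: l).map encodeTerm, true :: w) =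
                ((a :: l).map encodeTerm, w) := by
              simp [stepM, stepCons, stepPair, encodeTerm, h0]
            rw [e, ih _ _ (by simp only [List.map_cons, hf]; omega)]
            simp [actL, act]

theorem actN_correct (l : List Term) (w : List Bool) : actN (l.map encodeTerm) w = actL l w :=
  machine_correct _ _ _ le_rfl

/-- All words of a given length. -/
def wordsN (n : ℕ) : List (List Bool) :=
  Nat.rec [[]] (fun _ l => l.map (List.cons true) ++ l.map (List.cons false)) n

theorem wordsN_primrec : Primrec wordsN := by
  unfold wordsN
  refine Primrec.nat_rec₁ _ ?_
  have h : ∀ t : Bool, Primrec (fun x : ℕ × List (List Bool) => x.2.map (List.cons t)) := fun t =>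
    Primrec.list_map Primrec.snd (Primrec.list_cons.comp (Primrec.const t) Primrec.snd).to₂
  exact (Primrec.list_append.comp (h true) (h false)).to₂

theorem mem_wordsN (n : ℕ) (w : List Bool) : w ∈ wordsN n ↔ w.length = n := by
  induction n generalizing w with
  | zero => simp [wordsN]
  | succ n ih =>
    have e : wordsN (n + 1) = (wordsN n).map (List.cons true) ++ (wordsN n).map (List.cons false) := rfl
    rw [e]
    rcases w with _ | ⟨_ | _, w⟩ <;> simp [ih]

/-- Pump certificates, on codes. -/
def PumpC (x : List ℕ × (List ℕ × List Bool × List Bool)) : Prop :=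
  (∀ a ∈ x.2.1, ∃ b ∈ x.1, b = a) ∧ x.2.2.2 ≠ [] ∧
    (actN x.2.1 x.2.2.1 = some (x.2.2.1 ++ x.2.2.2) ∨
      (actN x.2.1 x.2.2.1 = none ∧ actN x.2.1 (x.2.2.1 ++ x.2.2.2) = some x.2.2.1))

theorem pumpC_primrec : PrimrecPred PumpC := by
  have hB : Primrec (fun x : List ℕ × (List ℕ × List Bool × List Bool) => x.1) := Primrec.fst
  have hl : Primrec (fun x : List ℕ × (List ℕ × List Bool × List Bool) => x.2.1) :=
    Primrec.fst.comp Primrec.snd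
  have hw : Primrec (fun x : List ℕ × (List ℕ × List Bool × List Bool) => x.2.2.1) :=
    Primrec.fst.comp (Primrec.snd.comp Primrec.snd)
  have hs : Primrec (fun x : List ℕ × (List ℕ × List Bool × List Bool) => x.2.2.2) :=
    Primrec.snd.comp (Primrec.snd.comp Primrec.snd)
  have hws := Primrec.list_append.comp hw hs
  have hmem : PrimrecRel (fun (a : ℕ) (L : List ℕ) => ∃ b ∈ L, b = a) :=
    (PrimrecRel.exists_mem_list (R := fun b a : ℕ => b = a) Primrec.eq).comp Primrec.snd Primrec.fst
  refine PrimrecPred.and ?_ (PrimrecPred.and ?_ (PrimrecPred.or ?_ (PrimrecPred.and ?_ ?_)))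
  · exact hmem.forall_mem_list.comp hl hB
  · exact (Primrec.eq.comp hs (Primrec.const [])).not
  · exact Primrec.eq.comp (actN_primrec.comp hl hw) (Primrec.option_some.comp hws)
  · exact Primrec.eq.comp (actN_primrec.comp hl hw) (Primrec.const none)
  · exact Primrec.eq.comp (actN_primrec.comp hl hws) (Primrec.option_some.comp hw)

/-- Finiteness certificates, on codes. -/
def FinC (x : List ℕ × (ℕ × List (List Bool))) : Prop :=
  (∀ w ∈ wordsN x.2.1, ∃ v ∈ x.2.2, v = w) ∧
    ∀ w ∈ x.2.2, ∀ F ∈ x.1, ∃ v ∈ x.2.2, some v = actN [F] w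

theorem finC_primrec : PrimrecPred FinC := by
  have hB : Primrec (fun x : List ℕ × (ℕ × List (List Bool)) => x.1) := Primrec.fst
  have hN : Primrec (fun x : List ℕ × (ℕ × List (List Bool)) => x.2.1) :=
    Primrec.fst.comp Primrec.snd
  have hW : Primrec (fun x : List ℕ × (ℕ × List (List Bool)) => x.2.2) :=
    Primrec.snd.comp Primrec.snd
  have hmem : PrimrecRel (fun (a : List Bool) (L : List (List Bool)) => ∃ b ∈ L, b = a) :=
    (PrimrecRel.exists_mem_list (R := fun b a : List Bool => b = a) Primrec.eq).comp
      Primrec.snd Primrec.fst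
  have h1 : PrimrecRel (fun (W : List (List Bool)) (o : Option (List Bool)) => ∃ v ∈ W, some v = o) :=
    PrimrecRel.exists_mem_list (R := fun (v : List Bool) (o : Option (List Bool)) => some v = o)
      (Primrec.eq.comp (Primrec.option_some.comp Primrec.fst) Primrec.snd)
  have hact : Primrec (fun x : ℕ × (List Bool × List (List Bool)) => actN [x.1] x.2.1) :=
    actN_primrec.comp (Primrec.list_cons.comp Primrec.fst (Primrec.const []))
      (Primrec.fst.comp Primrec.snd)
  have h2 : PrimrecRel (fun (F : ℕ) (y : List Bool × List (List Bool)) =>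
      ∃ v ∈ y.2, some v = actN [F] y.1) := h1.comp (Primrec.snd.comp Primrec.snd) hact
  have h3 : PrimrecRel (fun (w : List Bool) (y : List ℕ × List (List Bool)) =>
      ∀ F ∈ y.1, ∃ v ∈ y.2, some v = actN [F] w) :=
    h2.forall_mem_list.comp (Primrec.fst.comp Primrec.snd)
      (Primrec.pair Primrec.fst (Primrec.snd.comp Primrec.snd))
  refine PrimrecPred.and ?_ ?_
  · exact hmem.forall_mem_list.comp (wordsN_primrec.comp hN) hW
  · exact h3.forall_mem_list.comp hW (Primrec.pair hB hW)

theorem pumpC_iff (B : List Term) : (∃ c, PumpC (B.map encodeTerm, c)) ↔ Pump B := by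
  constructor
  · rintro ⟨⟨K, w, s⟩, h1, h2, h3⟩
    dsimp only at h1 h2 h3
    have : ∃ l : List Term, (∀ t ∈ l, t ∈ B) ∧ l.map encodeTerm = K := by
      clear h3
      induction K with
      | nil => exact ⟨[], by simp, rfl⟩
      | cons a K ih =>
        obtain ⟨l, hl, rfl⟩ := ih (fun a ha => h1 a (by simp [ha]))
        obtain ⟨b, hb, rfl⟩ := h1 a (by simp)
        obtain ⟨t, ht, rfl⟩ := List.mem_map.1 hb
        refine ⟨t :: l, ?_, rfl⟩
        intro u hu
        rcases List.mem_cons.1 hu with rfl | hu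
        · exact ht
        · exact hl u hu
    obtain ⟨l, hl, rfl⟩ := this
    simp only [actN_correct] at h3
    exact ⟨l, hl, w, s, h2, h3⟩
  · rintro ⟨l, hl, w, s, hs, h⟩
    refine ⟨⟨l.map encodeTerm, w, s⟩, ?_, hs, ?_⟩
    · intro a ha
      obtain ⟨t, ht, rfl⟩ := List.mem_map.1 ha
      exact ⟨_, List.mem_map_of_mem (hl t ht), rfl⟩
    · simpa only [actN_correct] using h

theorem actN_single (F : Term) (w : List Bool) : actN [encodeTerm F] w = act F w := by
  have := actN_correct [F] w
  rw [List.map_cons, List.map_nil] at this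
  rw [this, actL]
  cases act F w <;> simp [actL]

theorem finC_iff (B : List Term) : (∃ c, FinC (B.map encodeTerm, c)) ↔ FinCert B := by
  constructor
  · rintro ⟨⟨N, W⟩, h1, h2⟩
    refine ⟨N, W, ?_, ?_⟩
    · intro w hw
      obtain ⟨v, hv, rfl⟩ := h1 w ((mem_wordsN _ _).2 hw)
      exact hv
    · intro w hw F hF
      obtain ⟨v, hv, h⟩ := h2 w hw _ (List.mem_map_of_mem hF)
      exact ⟨v, hv, by rw [h, actN_single]⟩
  · rintro ⟨N, W, h1, h2⟩
    refine ⟨⟨N, W⟩, ?_, ?_⟩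
    · intro w hw
      exact ⟨w, h1 w ((mem_wordsN _ _).1 hw), rfl⟩
    · intro w hw F hF
      obtain ⟨t, ht, rfl⟩ := List.mem_map.1 hF
      obtain ⟨v, hv, h⟩ := h2 w hw t ht
      exact ⟨v, hv, by rw [actN_single, h]⟩

theorem encodeTerm_surj (n : ℕ) : ∃ t, encodeTerm t = n := by
  induction n using Nat.strong_induction_on with
  | _ n ih =>
    rcases n with _ | _ | _ | n
    · exact ⟨I, rfl⟩
    · exact ⟨L, rfl⟩
    · exact ⟨R, rfl⟩
    · have h1 := Nat.unpair_left_le (n / 2)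
      have h2 := Nat.unpair_right_le (n / 2)
      obtain ⟨a, ha⟩ := ih (n / 2).unpair.1 (by omega)
      obtain ⟨b, hb⟩ := ih (n / 2).unpair.2 (by omega)
      rcases Nat.mod_two_eq_zero_or_one n with h | h
      · refine ⟨comp a b, ?_⟩
        simp only [encodeTerm, ha, hb, Nat.pair_unpair]; omega
      · refine ⟨pair a b, ?_⟩
        simp only [encodeTerm, ha, hb, Nat.pair_unpair]; omega

theorem encodeTermList_eq (B : List Term) :
    encodeTermList B = Encodable.encode (B.map encodeTerm) := by
  induction B with
  | nil => rfl
  | cons a B ih => simp [encodeTermList, ih]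

theorem map_encode_surj (K : List ℕ) : ∃ B : List Term, B.map encodeTerm = K := by
  induction K with
  | nil => exact ⟨[], rfl⟩
  | cons a K ih =>
    obtain ⟨B, rfl⟩ := ih
    obtain ⟨t, rfl⟩ := encodeTerm_surj a
    exact ⟨t :: B, rfl⟩

theorem pump_computable : ComputablePred fun K : List ℕ => ∃ c, PumpC (K, c) := by
  have re : ∀ {γ : Type} [Primcodable γ] (P : List ℕ × γ → Prop), PrimrecPred P →
      REPred fun K : List ℕ => ∃ c, P (K, c) := by
    intro γ _ P hP
    obtain ⟨_, hP⟩ := hP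
    have hf : Primrec₂ (fun (K : List ℕ) (n : ℕ) =>
        (Encodable.decode (α := γ) n).bind fun c => if P (K, c) then some c else none) := by
      refine Primrec.option_bind (Primrec.decode.comp Primrec.snd) ?_
      have hpair : Primrec (fun x : (List ℕ × ℕ) × γ => (x.1.1, x.2)) :=
        Primrec.pair (Primrec.fst.comp Primrec.fst) Primrec.snd
      refine Primrec.ite (PrimrecPred.comp ⟨_, hP⟩ hpair) (Primrec.option_some.comp Primrec.snd)
        (Primrec.const none)
    have := (Partrec.rfindOpt hf.to_comp).dom_re
    refine this.of_eq fun K => ?_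
    rw [Nat.rfindOpt_dom]
    constructor
    · rintro ⟨n, c, hc⟩
      simp only [Option.mem_def, Option.bind_eq_some_iff] at hc
      obtain ⟨d, _, hd⟩ := hc
      by_cases h : P (K, d)
      · exact ⟨d, h⟩
      · simp [h] at hd
    · rintro ⟨c, hc⟩
      exact ⟨Encodable.encode c, c, by simp [hc]⟩
  rw [ComputablePred.computable_iff_re_compl_re']
  refine ⟨re _ pumpC_primrec, (re _ finC_primrec).of_eq fun K => ?_⟩
  obtain ⟨B, rfl⟩ := map_encode_surj K
  rw [pumpC_iff, finC_iff]
  constructor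
  · intro h1 h2
    exact pump_infinite B h2 (finCert_finite B h1)
  · intro h
    exact (dichotomy B).resolve_right h

/-- Theorem 4: it is decidable (uniformly in the finite set `B`) whether the
submonoid of CQ generated by `B` is infinite. -/
theorem infinite_generated_submonoid_CQ_decidable :
    ∃ f : ℕ → Bool, Computable f ∧
      ∀ B : List Term,
        (f (encodeTermList B) = true ↔ (genSubmonoidCQ B).Infinite) := by
  obtain ⟨_, hc⟩ := pump_computable
  refine ⟨fun n => ((Encodable.decode (α := List ℕ) n).map
    fun K => decide (∃ c, PumpC (K, c))).getD false, ?_, ?_⟩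
  · exact Computable.option_getD
      (Computable.option_map Computable.decode (hc.comp Computable.snd).to₂) (Computable.const false)
  · intro B
    rw [encodeTermList_eq]
    simp only [Encodable.encodek, Option.map_some, Option.getD_some, decide_eq_true_eq]
    rw [pumpC_iff]
    constructor
    · exact pump_infinite B
    · intro h
      exact (dichotomy B).resolve_left fun h' => h (finCert_finite B h')
end

section
/- (Theorem 5) Let B be a finite set of terms in CQ normal form. Then it is decidable whether B covers Cantor space. -/
open Term

namespace CovDec

/-! ### Rule level: prefix rewriting on words -/

abbrev W := List Bool
abbrev Tri := W × Bool × W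

/-- proper prefixes -/
def pp (p : W) : List W := p.foldr (fun c acc => [] :: acc.map (fun x => c :: x)) []

theorem mem_pp (p x : W) : x ∈ pp p ↔ ∃ y, y ≠ [] ∧ p = x ++ y := by
  induction p generalizing x with
  | nil => simp [pp]
  | cons c p ih =>
    have h : pp (c :: p) = [] :: (pp p).map (fun x => c :: x) := rfl
    rw [h, List.mem_cons, List.mem_map]
    constructor
    · rintro (rfl | ⟨a, ha, rfl⟩)
      · exact ⟨c :: p, by simp, rfl⟩
      · obtain ⟨y, hy, rfl⟩ := (ih a).1 ha
        exact ⟨y, hy, rfl⟩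
    · rintro ⟨y, hy, h⟩
      cases x with
      | nil => exact Or.inl rfl
      | cons a x =>
        simp only [List.cons_append, List.cons.injEq] at h
        obtain ⟨rfl, h⟩ := h
        exact Or.inr ⟨x, (ih x).2 ⟨y, hy, h⟩, rfl⟩

def KK (rs : List (W × W)) : List W := rs.flatMap (fun r => pp r.1)

theorem mem_KK (rs : List (W × W)) (x : W) :
    x ∈ KK rs ↔ ∃ r ∈ rs, ∃ y, y ≠ [] ∧ r.1 = x ++ y := by
  simp only [KK, List.mem_flatMap, mem_pp]

theorem KK_prefix {rs : List (W × W)} {x y : W} (h : x ++ y ∈ KK rs) : x ∈ KK rs := by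
  rw [mem_KK] at h ⊢
  obtain ⟨r, hr, z, hz, e⟩ := h
  exact ⟨r, hr, y ++ z, by simp [hz], by simp [e]⟩

theorem KK_nil {rs : List (W × W)} {y : W} (h : y ∈ KK rs) : [] ∈ KK rs :=
  KK_prefix (x := []) (y := y) h

def Stp (rs : List (W × W)) (w w' : W) : Prop := ∃ r ∈ rs, ∃ v, w = r.1 ++ v ∧ w' = r.2 ++ v

def Rch (rs : List (W × W)) : W → W → Prop := Relation.ReflTransGen (Stp rs)

def Mortal (rs : List (W × W)) (w : W) : Prop := ∃ y ∈ KK rs, Rch rs w y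

theorem Rch_append {rs : List (W × W)} {w w' : W} (h : Rch rs w w') (z : W) :
    Rch rs (w ++ z) (w' ++ z) := by
  induction h with
  | refl => exact Relation.ReflTransGen.refl
  | tail _ h ih =>
    obtain ⟨r, hr, v, rfl, rfl⟩ := h
    exact ih.tail ⟨r, hr, v ++ z, by simp, by simp⟩

def stepQ (T : List Tri) (Q : List W) (c : Bool) : List W :=
  T.flatMap (fun t => if t.1 ∈ Q ∧ t.2.1 = c then [t.2.2] else [])

theorem mem_stepQ (T : List Tri) (Q : List W) (c : Bool) (y : W) :
    y ∈ stepQ T Q c ↔ ∃ x ∈ Q, (x, c, y) ∈ T := by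
  simp only [stepQ, List.mem_flatMap]
  constructor
  · rintro ⟨⟨x, d, y'⟩, ht, h⟩
    split_ifs at h with hc
    · simp only [List.mem_singleton] at h
      obtain ⟨h1, h2⟩ := hc
      simp only at h1 h2
      subst h; subst h2
      exact ⟨x, h1, ht⟩
    · simp at h
  · rintro ⟨x, hx, ht⟩
    exact ⟨_, ht, by simp [hx]⟩

def runQ (T : List Tri) (Q : List W) (w : W) : List W := w.foldl (stepQ T) Q

def runl (T : List Tri) (w : W) : List W := runQ T [[]] w

theorem runQ_mono {T T' : List Tri} (hT : T ⊆ T') (w : W) {Q Q' : List W} (hQ : Q ⊆ Q') :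
    runQ T Q w ⊆ runQ T' Q' w := by
  induction w generalizing Q Q' with
  | nil => exact hQ
  | cons c w ih =>
    apply ih
    intro y hy
    rw [mem_stepQ] at hy ⊢
    obtain ⟨x, hx, ht⟩ := hy
    exact ⟨x, hQ hx, hT ht⟩

theorem runl_append (T : List Tri) (w v : W) : runl T (w ++ v) = runQ T (runl T w) v := by
  simp [runl, runQ]

theorem mem_runl_concat (T : List Tri) (w : W) (c : Bool) (y : W) :
    y ∈ runl T (w ++ [c]) ↔ ∃ x ∈ runl T w, (x, c, y) ∈ T := by
  rw [runl_append]; exact mem_stepQ _ _ _ _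

def cond (rs : List (W × W)) (T : List Tri) (t : Tri) : Prop :=
  t.1 ++ [t.2.1] = t.2.2 ∨ ∃ r ∈ rs, ∃ z ∈ ([[], [true], [false]] : List W),
    r.1 ++ z = t.1 ++ [t.2.1] ∧ t.2.2 ∈ runl T (r.2 ++ z)

instance (rs : List (W × W)) (T : List Tri) (t : Tri) : Decidable (cond rs T t) := by
  unfold cond; infer_instance

def UU (rs : List (W × W)) : List Tri :=
  (KK rs).flatMap fun x => [true, false].flatMap fun c => (KK rs).map fun y => (x, c, y)

theorem mem_UU (rs : List (W × W)) (x : W) (c : Bool) (y : W) :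
    (x, c, y) ∈ UU rs ↔ x ∈ KK rs ∧ y ∈ KK rs := by
  cases c <;> simp [UU]

def nxt (rs : List (W × W)) (T : List Tri) : List Tri :=
  (UU rs).filter fun t => decide (cond rs T t)

theorem mem_nxt (rs : List (W × W)) (T : List Tri) (t : Tri) :
    t ∈ nxt rs T ↔ t ∈ UU rs ∧ cond rs T t := by simp [nxt]

def stage (rs : List (W × W)) (n : ℕ) : List Tri := (nxt rs)^[n] []

theorem stage_succ (rs : List (W × W)) (n : ℕ) : stage rs (n + 1) = nxt rs (stage rs n) := by
  simp [stage, Function.iterate_succ_apply']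

theorem nxt_mono (rs : List (W × W)) {T T' : List Tri} (h : T ⊆ T') : nxt rs T ⊆ nxt rs T' := by
  intro t ht
  rw [mem_nxt] at ht ⊢
  refine ⟨ht.1, ht.2.imp id ?_⟩
  rintro ⟨r, hr, z, hz, e, hy⟩
  exact ⟨r, hr, z, hz, e, runQ_mono h _ (List.Subset.refl _) hy⟩

theorem stage_mono (rs : List (W × W)) (n : ℕ) : stage rs n ⊆ stage rs (n + 1) := by
  induction n with
  | zero => simp [stage]
  | succ n ih => rw [stage_succ, stage_succ rs (n + 1)]; exact nxt_mono rs ih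

theorem stage_UU (rs : List (W × W)) (n : ℕ) : stage rs n ⊆ UU rs := by
  cases n with
  | zero => simp [stage]
  | succ n => rw [stage_succ]; intro t ht; exact ((mem_nxt _ _ _).1 ht).1

theorem exists_closed (rs : List (W × W)) :
    ∃ n ∈ List.range ((UU rs).length + 1), ∀ t ∈ nxt rs (stage rs n), t ∈ stage rs n := by
  by_contra hcon
  push Not at hcon
  have key : ∀ n, n ≤ (UU rs).length + 1 → n ≤ (stage rs n).toFinset.card := by
    intro n
    induction n with
    | zero => simp
    | succ n ih =>
      intro hn
      obtain ⟨t, ht, ht'⟩ := hcon n (by simp; omega)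
      have := ih (by omega)
      have hlt : (stage rs n).toFinset.card < (stage rs (n + 1)).toFinset.card := by
        apply Finset.card_lt_card
        rw [Finset.ssubset_iff_of_subset]
        · refine ⟨t, ?_, ?_⟩
          · rw [stage_succ]; simpa using ht
          · simpa using ht'
        · intro s hs
          simp only [List.mem_toFinset] at hs ⊢
          exact stage_mono rs n hs
      omega
  have h1 := key _ le_rfl
  have h2 : (stage rs ((UU rs).length + 1)).toFinset.card ≤ (UU rs).toFinset.card := by
    apply Finset.card_le_card
    intro s hs
    simp only [List.mem_toFinset] at hs ⊢
    exact stage_UU rs _ hs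
  have h3 := List.toFinset_card_le (UU rs)
  omega

def SoundT (rs : List (W × W)) (T : List Tri) : Prop :=
  ∀ x c y, (x, c, y) ∈ T → Rch rs (x ++ [c]) y

theorem run_sound {rs : List (W × W)} {T : List Tri} (hT : SoundT rs T) (w : W) :
    ∀ y ∈ runl T w, Rch rs w y := by
  induction w using List.reverseRecOn with
  | nil =>
    intro y hy
    simp [runl, runQ] at hy
    subst hy; exact Relation.ReflTransGen.refl
  | append_singleton w c ih =>
    intro y hy
    obtain ⟨x, hx, ht⟩ := (mem_runl_concat _ _ _ _).1 hy
    exact (Rch_append (ih x hx) [c]).trans (hT x c y ht)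

theorem stage_sound (rs : List (W × W)) (n : ℕ) : SoundT rs (stage rs n) := by
  induction n with
  | zero => intro x c y h; simp [stage] at h
  | succ n ih =>
    intro x c y h
    rw [stage_succ, mem_nxt] at h
    rcases h.2 with h | ⟨r, hr, z, _, e, hy⟩
    · simp only at h
      rw [h]; exact Relation.ReflTransGen.refl
    · simp only at e hy
      exact Relation.ReflTransGen.head ⟨r, hr, z, e.symm, rfl⟩ (run_sound ih _ _ hy)

theorem run_KK {rs : List (W × W)} {T : List Tri} (hU : T ⊆ UU rs) (h0 : [] ∈ KK rs) (w : W) :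
    ∀ y ∈ runl T w, y ∈ KK rs := by
  induction w using List.reverseRecOn with
  | nil =>
    intro y hy
    simp [runl, runQ] at hy
    subst hy; exact h0
  | append_singleton w c ih =>
    intro y hy
    obtain ⟨x, hx, ht⟩ := (mem_runl_concat _ _ _ _).1 hy
    exact ((mem_UU _ _ _ _).1 (hU ht)).2

theorem run_self {rs : List (W × W)} {T : List Tri} (hC : ∀ t ∈ nxt rs T, t ∈ T) (x : W)
    (hx : x ∈ KK rs) : x ∈ runl T x := by
  induction x using List.reverseRecOn with
  | nil => simp [runl, runQ]
  | append_singleton w c ih =>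
    have hw := KK_prefix hx
    rw [mem_runl_concat]
    refine ⟨w, ih hw, hC _ ?_⟩
    rw [mem_nxt, mem_UU]
    exact ⟨⟨hw, hx⟩, Or.inl rfl⟩

theorem run_step {rs : List (W × W)} {T : List Tri} (hU : T ⊆ UU rs)
    (hC : ∀ t ∈ nxt rs T, t ∈ T) (h0 : [] ∈ KK rs) {w w' : W} (h : Stp rs w w')
    (hne : runl T w' ≠ []) : runl T w ≠ [] := by
  obtain ⟨r, hr, v, rfl, rfl⟩ := h
  -- core: generalized transition
  have core : ∀ (x : W) (c : Bool) (z : W), z ∈ ([[], [true], [false]] : List W) →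
      r.1 ++ z = x ++ [c] → x ∈ KK rs → runl T (r.2 ++ z) ⊆ runl T (r.1 ++ z) := by
    intro x c z hz e hx y hy
    rw [e, mem_runl_concat]
    refine ⟨x, run_self hC x hx, hC _ ?_⟩
    rw [mem_nxt, mem_UU]
    exact ⟨⟨hx, run_KK hU h0 _ _ hy⟩, Or.inr ⟨r, hr, z, hz, e, hy⟩⟩
  have fin : ∀ z v', runl T (r.2 ++ z) ⊆ runl T (r.1 ++ z) →
      runl T (r.2 ++ z ++ v') ≠ [] → runl T (r.1 ++ z ++ v') ≠ [] := by
    intro z v' hs hn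
    rw [runl_append] at hn ⊢
    intro he
    apply hn
    have := runQ_mono (List.Subset.refl T) v' hs
    rw [he] at this
    exact List.subset_nil.1 this
  rcases List.eq_nil_or_concat r.1 with hp | ⟨x, c, hp⟩
  · cases v with
    | nil => simp [hp, runl, runQ]
    | cons c v =>
      have := fin [c] v (core [] c [c] (by cases c <;> simp) (by simp [hp]) h0)
      simp only [List.append_assoc, List.cons_append, List.nil_append] at this
      exact this hne
  · have hx : x ∈ KK rs := by
      rw [mem_KK]
      exact ⟨r, hr, [c], by simp, by simpa using hp⟩
    have := fin [] v (core x c [] (by simp) (by simpa using hp) hx)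
    simp only [List.append_nil] at this
    exact this hne

theorem run_complete {rs : List (W × W)} {T : List Tri} (hU : T ⊆ UU rs)
    (hC : ∀ t ∈ nxt rs T, t ∈ T) {w : W} (h : Mortal rs w) : runl T w ≠ [] := by
  obtain ⟨y, hy, h⟩ := h
  have h0 := KK_nil hy
  induction h using Relation.ReflTransGen.head_induction_on with
  | refl => exact List.ne_nil_of_mem (run_self hC y hy)
  | head h _ ih => exact run_step hU hC h0 h ih

def okT (rs : List (W × W)) (T : List Tri) : Prop :=
  [] ∈ KK rs ∧ ∀ x ∈ KK rs, ∀ c ∈ [true, false], runl T (x ++ [c]) ≠ []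

def Dec (rs : List (W × W)) : Prop :=
  ∃ n ∈ List.range ((UU rs).length + 1),
    (∀ t ∈ nxt rs (stage rs n), t ∈ stage rs n) ∧ okT rs (stage rs n)

theorem ok_iff (rs : List (W × W)) (n : ℕ)
    (hC : ∀ t ∈ nxt rs (stage rs n), t ∈ stage rs n) :
    okT rs (stage rs n) ↔ ∀ w, Mortal rs w := by
  constructor
  · rintro ⟨h0, h⟩ w
    induction w using List.reverseRecOn with
    | nil => exact ⟨[], h0, Relation.ReflTransGen.refl⟩
    | append_singleton w c ih =>
      obtain ⟨x, hx, hr⟩ := ih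
      have hne := h x hx c (by cases c <;> simp)
      obtain ⟨y, hy⟩ := List.exists_mem_of_ne_nil _ hne
      exact ⟨y, run_KK (stage_UU rs n) h0 _ _ hy,
        (Rch_append hr [c]).trans (run_sound (stage_sound rs n) _ _ hy)⟩
  · intro h
    obtain ⟨y, hy, _⟩ := h []
    exact ⟨KK_nil hy, fun x _ c _ => run_complete (stage_UU rs n) hC (h _)⟩

theorem Dec_iff (rs : List (W × W)) : Dec rs ↔ ∀ w, Mortal rs w := by
  constructor
  · rintro ⟨n, _, hC, hok⟩
    exact (ok_iff rs n hC).1 hok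
  · intro h
    obtain ⟨n, hn, hC⟩ := exists_closed rs
    exact ⟨n, hn, hC, (ok_iff rs n hC).2 h⟩

/-! ### Primitive recursiveness -/

theorem p_ex {α β : Type*} [Primcodable α] [Primcodable β] {f : α → List β} {Q : α → β → Prop}
    (hf : Primrec f) (hQ : PrimrecPred fun q : α × β => Q q.1 q.2) :
    PrimrecPred fun a => ∃ b ∈ f a, Q a b := by
  have h : PrimrecRel fun (b : β) (a : α) => Q a b :=
    hQ.comp (Primrec.pair Primrec.snd Primrec.fst)
  exact h.exists_mem_list.comp hf Primrec.id

theorem p_all {α β : Type*} [Primcodable α] [Primcodable β] {f : α → List β} {Q : α → β → Prop}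
    (hf : Primrec f) (hQ : PrimrecPred fun q : α × β => Q q.1 q.2) :
    PrimrecPred fun a => ∀ b ∈ f a, Q a b := by
  have h : PrimrecRel fun (b : β) (a : α) => Q a b :=
    hQ.comp (Primrec.pair Primrec.snd Primrec.fst)
  exact h.forall_mem_list.comp hf Primrec.id

theorem p_mem {α β : Type*} [Primcodable α] [Primcodable β] {f : α → List β} {g : α → β}
    (hf : Primrec f) (hg : Primrec g) : PrimrecPred fun a => g a ∈ f a := by
  refine (p_ex (Q := fun a b => b = g a) hf ?_).of_eq fun a => by simp
  exact Primrec.eq.comp Primrec.snd (hg.comp Primrec.fst)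

open Primrec in
theorem p_pp : Primrec pp := by
  unfold pp
  refine list_foldr (h := fun (_ : W) (q : Bool × List W) => [] :: q.2.map (fun x => q.1 :: x))
    Primrec.id (const []) ?_
  refine list_cons.comp (const []) ?_
  refine list_map (snd.comp snd) ?_
  exact list_cons.comp (fst.comp (snd.comp fst)) snd

open Primrec in
theorem p_KK : Primrec KK := by
  unfold KK
  exact list_flatMap Primrec.id (p_pp.comp (fst.comp snd))

open Primrec in
theorem p_stepQ : Primrec fun q : List Tri × List W × Bool => stepQ q.1 q.2.1 q.2.2 := by
  unfold stepQ
  refine list_flatMap fst ?_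
  refine Primrec.ite ?_ ?_ (const [])
  · refine PrimrecPred.and ?_ ?_
    · exact p_mem (fst.comp (snd.comp fst)) (fst.comp snd)
    · exact Primrec.eq.comp (fst.comp (snd.comp snd)) (snd.comp (snd.comp fst))
  · exact list_cons.comp (snd.comp (snd.comp snd)) (const [])

open Primrec in
theorem p_runl : Primrec₂ runl := by
  unfold runl runQ
  refine list_foldl (h := fun (q : List Tri × W) (s : List W × Bool) => stepQ q.1 s.1 s.2)
    snd (const [[]]) ?_
  exact p_stepQ.comp (Primrec.pair (fst.comp fst) snd)

open Primrec in
theorem p_cond : PrimrecPred fun q : (List (W × W) × List Tri) × Tri => cond q.1.1 q.1.2 q.2 := by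
  unfold cond
  refine PrimrecPred.or ?_ ?_
  · exact Primrec.eq.comp (list_append.comp (fst.comp snd)
      (list_cons.comp (fst.comp (snd.comp snd)) (const []))) (snd.comp (snd.comp snd))
  · refine p_ex (fst.comp fst) ?_
    refine p_ex (const _) ?_
    refine PrimrecPred.and ?_ ?_
    · refine Primrec.eq.comp (list_append.comp (fst.comp (snd.comp fst)) snd) ?_
      have h : Primrec fun q : (((List (W × W) × List Tri) × Tri) × (W × W)) × W => q.1.1.2 :=
        snd.comp (fst.comp fst)
      exact list_append.comp (fst.comp h) (list_cons.comp (fst.comp (snd.comp h)) (const []))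
    · have h : Primrec fun q : (((List (W × W) × List Tri) × Tri) × (W × W)) × W => q.1.1 :=
        fst.comp fst
      exact p_mem (p_runl.comp (snd.comp (fst.comp h))
        (list_append.comp (snd.comp (snd.comp fst)) snd)) (snd.comp (snd.comp (snd.comp h)))

open Primrec in
theorem p_UU : Primrec UU := by
  unfold UU
  refine list_flatMap p_KK ?_
  refine list_flatMap (const _) ?_
  refine list_map (p_KK.comp (fst.comp fst)) ?_
  exact Primrec.pair (snd.comp (fst.comp fst)) (Primrec.pair (snd.comp fst) snd)

open Primrec in
theorem p_nxt : Primrec₂ nxt := by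
  have h : PrimrecRel fun (t : Tri) (q : List (W × W) × List Tri) => cond q.1 q.2 t :=
    p_cond.comp (Primrec.pair snd fst)
  exact (h.listFilter.comp (p_UU.comp fst) Primrec.id)

open Primrec in
theorem p_stage : Primrec₂ stage := by
  unfold stage
  exact nat_iterate snd (const []) (p_nxt.comp (fst.comp fst) snd)

open Primrec in
theorem p_Dec : PrimrecPred Dec := by
  unfold Dec okT
  refine p_ex (list_range.comp (succ.comp (list_length.comp p_UU))) ?_
  have hs : Primrec fun q : List (W × W) × ℕ => stage q.1 q.2 := p_stage
  have hK : Primrec fun q : List (W × W) × ℕ => KK q.1 := p_KK.comp fst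
  refine PrimrecPred.and ?_ (PrimrecPred.and ?_ ?_)
  · exact p_all (p_nxt.comp fst hs) (p_mem (hs.comp fst) snd)
  · exact p_mem hK (const [])
  · refine p_all hK (p_all (const _) (PrimrecPred.not ?_))
    exact Primrec.eq.comp (p_runl.comp (hs.comp (fst.comp fst))
      (list_append.comp (snd.comp fst) (list_cons.comp snd (const [])))) (const [])

end CovDec

namespace CovDec

/-! ### Decoding of terms -/

abbrev Lv := List (W × W)

def lcomp (a b : Lv) : Lv := a.flatMap fun r => b.map fun s => ([], s.2 ++ r.2)
def lpair (a b : Lv) : Lv :=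
  a.map (fun r => (true :: r.1, r.2)) ++ b.map (fun r => (false :: r.1, r.2))

def lv : Term → Lv
  | Term.I => [([], [])]
  | Term.L => [([], [true])]
  | Term.R => [([], [false])]
  | Term.comp a b => lcomp (lv a) (lv b)
  | Term.pair a b => lpair (lv a) (lv b)

def GG (l : List Lv) : Lv :=
  if l.length = 0 then [([], [])] else
  if l.length = 1 then [([], [true])] else
  if l.length = 2 then [([], [false])] else
  if (l.length - 3) % 2 = 0 then
    lcomp (l.getD (Nat.unpair ((l.length - 3) / 2)).1 []) (l.getD (Nat.unpair ((l.length - 3) / 2)).2 [])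
  else
    lpair (l.getD (Nat.unpair ((l.length - 3) / 2)).1 []) (l.getD (Nat.unpair ((l.length - 3) / 2)).2 [])

def tab (n : ℕ) : List Lv := (fun l => l ++ [GG l])^[n] []

def lvN (n : ℕ) : Lv := GG (tab n)

theorem tab_eq (n : ℕ) : tab n = (List.range n).map lvN := by
  induction n with
  | zero => rfl
  | succ n ih =>
    have h : tab (n + 1) = tab n ++ [GG (tab n)] := by simp [tab, Function.iterate_succ_apply']
    rw [h, List.range_succ, List.map_append, ← ih]; rfl

theorem tab_getD (n k : ℕ) (h : k < n) : (tab n).getD k [] = lvN k := by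
  rw [tab_eq, List.getD_eq_getElem?_getD]
  simp [h]

theorem tab_length (n : ℕ) : (tab n).length = n := by rw [tab_eq]; simp

theorem lvN_encode (t : Term) : lvN (encodeTerm t) = lv t := by
  induction t with
  | I => simp [lvN, GG, tab_length, encodeTerm, lv]
  | L => simp [lvN, GG, tab_length, encodeTerm, lv]
  | R => simp [lvN, GG, tab_length, encodeTerm, lv]
  | comp a b iha ihb =>
    have h1 := Nat.left_le_pair (encodeTerm a) (encodeTerm b)
    have h2 := Nat.right_le_pair (encodeTerm a) (encodeTerm b)
    rw [lvN, GG, tab_length, encodeTerm]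
    generalize hm : Nat.pair (encodeTerm a) (encodeTerm b) = m at *
    have e1 : (2 * m + 3 - 3) % 2 = 0 := by omega
    have e2 : (2 * m + 3 - 3) / 2 = m := by omega
    rw [if_neg (by omega), if_neg (by omega), if_neg (by omega), if_pos e1, e2, ← hm,
      Nat.unpair_pair, hm, tab_getD _ _ (by simp only; omega), tab_getD _ _ (by simp only; omega),
      iha, ihb, lv]
  | pair a b iha ihb =>
    have h1 := Nat.left_le_pair (encodeTerm a) (encodeTerm b)
    have h2 := Nat.right_le_pair (encodeTerm a) (encodeTerm b)
    rw [lvN, GG, tab_length, encodeTerm]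
    generalize hm : Nat.pair (encodeTerm a) (encodeTerm b) = m at *
    have e1 : ¬ (2 * m + 4 - 3) % 2 = 0 := by omega
    have e2 : (2 * m + 4 - 3) / 2 = m := by omega
    rw [if_neg (by omega), if_neg (by omega), if_neg (by omega), if_neg e1, e2, ← hm,
      Nat.unpair_pair, hm, tab_getD _ _ (by simp only; omega), tab_getD _ _ (by simp only; omega),
      iha, ihb, lv]

open Primrec in
theorem p_lcomp : Primrec₂ lcomp := by
  unfold lcomp
  refine list_flatMap fst ?_
  refine list_map (snd.comp fst) ?_
  exact Primrec.pair (const []) (list_append.comp (snd.comp snd) (snd.comp (snd.comp fst)))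

open Primrec in
theorem p_lpair : Primrec₂ lpair := by
  unfold lpair
  refine list_append.comp ?_ ?_
  · exact list_map fst (Primrec.pair (list_cons.comp (const true) (fst.comp snd)) (snd.comp snd))
  · exact list_map snd (Primrec.pair (list_cons.comp (const false) (fst.comp snd)) (snd.comp snd))

open Primrec in
theorem p_GG : Primrec GG := by
  unfold GG
  have hl : Primrec fun l : List Lv => l.length := list_length
  have hs : Primrec fun l : List Lv => l.length - 3 := nat_sub.comp hl (const 3)
  have hu : Primrec fun l : List Lv => Nat.unpair ((l.length - 3) / 2) :=
    unpair.comp (nat_div.comp hs (const 2))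
  have ha : Primrec fun l : List Lv => l.getD (Nat.unpair ((l.length - 3) / 2)).1 [] :=
    (list_getD []).comp Primrec.id (fst.comp hu)
  have hb : Primrec fun l : List Lv => l.getD (Nat.unpair ((l.length - 3) / 2)).2 [] :=
    (list_getD []).comp Primrec.id (snd.comp hu)
  refine Primrec.ite (Primrec.eq.comp hl (const 0)) (const _) ?_
  refine Primrec.ite (Primrec.eq.comp hl (const 1)) (const _) ?_
  refine Primrec.ite (Primrec.eq.comp hl (const 2)) (const _) ?_
  refine Primrec.ite (Primrec.eq.comp (nat_mod.comp hs (const 2)) (const 0)) ?_ ?_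
  · exact p_lcomp.comp ha hb
  · exact p_lpair.comp ha hb

open Primrec in
theorem p_lvN : Primrec lvN := by
  unfold lvN tab
  refine p_GG.comp (nat_iterate Primrec.id (const []) ?_)
  exact list_append.comp snd (list_cons.comp (p_GG.comp snd) (const []))

def rulesN (n : ℕ) : Lv := ((Encodable.decode (α := List ℕ) n).getD []).flatMap lvN

open Primrec in
theorem p_rulesN : Primrec rulesN := by
  unfold rulesN
  exact list_flatMap (option_getD.comp Primrec.decode (const [])) (p_lvN.comp snd)

theorem encodeTermList_eq (B : List Term) :
    encodeTermList B = Encodable.encode (B.map encodeTerm) := by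
  induction B with
  | nil => rfl
  | cons a l ih => simp [encodeTermList, ih]

theorem rulesN_encode (B : List Term) : rulesN (encodeTermList B) = B.flatMap lv := by
  rw [rulesN, encodeTermList_eq, Encodable.encodek, Option.getD_some, List.flatMap_map]
  simp only [lvN_encode]

/-! ### Semantics of terms -/

def sem : Term → W → Option W
  | Term.I, w => some w
  | Term.L, w => some (true :: w)
  | Term.R, w => some (false :: w)
  | Term.comp a b, w => (sem a w).bind (sem b)
  | Term.pair _ _, [] => none
  | Term.pair a _, true :: w => sem a w
  | Term.pair _ b, false :: w => sem b w

theorem sem_comp (a b : Term) (w : W) : sem (comp a b) w = (sem a w).bind (sem b) := by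
  simp [sem]

theorem sem_assoc {a b : Term} (h : AssocEq a b) : sem a = sem b := by
  induction h with
  | assoc a b c =>
    funext w; simp only [sem_comp, Option.bind_assoc]
  | refl => rfl
  | symm _ ih => exact ih.symm
  | trans _ _ ih1 ih2 => exact ih1.trans ih2
  | comp_congr _ _ ih1 ih2 => funext w; simp only [sem_comp, ih1, ih2]
  | pair_congr _ _ ih1 ih2 =>
    funext w
    rcases w with _ | ⟨_ | _, w⟩ <;> simp [sem, ih1, ih2]

theorem sem_step {a b : Term} (h : Step rules15 a b) : sem a = sem b := by
  induction h with
  | rule hn hr =>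
    funext w
    cases hr with
    | r1 => simp [sem]
    | r2 => simp [sem]
    | r3 => rcases w with _ | ⟨_ | _, w⟩ <;> simp [sem]
    | r4 => simp [sem]
    | r5 => 
      rw [sem_comp]
      have : sem Term.I = some := by funext w; simp [sem]
      rw [this]; simp
    | r6 => simp [rules15] at hn
    | r7 => simp [rules15] at hn
  | comp_left _ ih => funext w; simp only [sem_comp, ih]
  | comp_right _ ih => funext w; simp only [sem_comp, ih]
  | pair_left _ ih => funext w; rcases w with _ | ⟨_ | _, w⟩ <;> simp [sem, ih]
  | pair_right _ ih => funext w; rcases w with _ | ⟨_ | _, w⟩ <;> simp [sem, ih]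

theorem sem_red {a b : Term} (h : Red rules15 a b) : sem a = sem b := by
  obtain ⟨c, h, hc⟩ := h
  rw [← sem_assoc hc]
  clear hc
  induction h with
  | refl => rfl
  | tail _ h ih =>
    obtain ⟨a', b', h1, h2, h3⟩ := h
    rw [ih, sem_assoc h1, sem_step h2, sem_assoc h3]

/-! ### Red toolkit -/

theorem Red.rfl' (a : Term) : Red rules15 a a := ⟨a, .refl, .refl a⟩

theorem red_assoc {a b : Term} (h : AssocEq a b) : Red rules15 a b := ⟨a, .refl, h⟩

theorem red_step {a b : Term} (h : Step rules15 a b) : Red rules15 a b :=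
  ⟨b, .single ⟨a, b, .refl a, h, .refl b⟩, .refl b⟩

theorem stepA_assoc_left {a b c : Term} (h : AssocEq a b) (h' : StepA rules15 b c) :
    StepA rules15 a c := by
  obtain ⟨x, y, h1, h2, h3⟩ := h'
  exact ⟨x, y, h.trans h1, h2, h3⟩

theorem red_trans {a b c : Term} (h : Red rules15 a b) (h' : Red rules15 b c) :
    Red rules15 a c := by
  obtain ⟨x, hx, hxb⟩ := h
  obtain ⟨y, hy, hyc⟩ := h'
  rcases Relation.ReflTransGen.cases_head hy with rfl | ⟨z, hz, hzy⟩
  · exact ⟨x, hx, hxb.trans hyc⟩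
  · exact ⟨y, hx.trans (.head (stepA_assoc_left hxb hz) hzy), hyc⟩

theorem red_comp_left {a a' : Term} (b : Term) (h : Red rules15 a a') :
    Red rules15 (comp a b) (comp a' b) := by
  obtain ⟨c, h, hc⟩ := h
  refine ⟨comp c b, ?_, .comp_congr hc (.refl b)⟩
  clear hc
  induction h with
  | refl => exact .refl
  | tail _ h ih =>
    obtain ⟨x, y, h1, h2, h3⟩ := h
    exact ih.tail ⟨comp x b, comp y b, .comp_congr h1 (.refl b), .comp_left h2,
      .comp_congr h3 (.refl b)⟩

def lt : Bool → Term
  | true => Term.L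
  | false => Term.R

def wt : W → Term
  | [] => Term.I
  | [c] => lt c
  | c :: d :: w => comp (wt (d :: w)) (lt c)

def cw (w : W) (X : Term) : Term := if w = [] then X else comp (wt w) X

theorem cw_lt (w : W) (c : Bool) : cw w (lt c) = wt (c :: w) := by
  cases w <;> simp [cw, wt]

theorem comp_red_cw (w : W) (X : Term) : Red rules15 (comp (wt w) X) (cw w X) := by
  cases w with
  | nil => exact red_step (.rule (n := 4) (by simp [rules15]) (.r4 X))
  | cons c w => simp only [cw, reduceCtorEq, if_false]; exact Red.rfl' _

theorem red_proj (c : Bool) (a b : Term) :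
    Step rules15 (comp (lt c) (Term.pair a b)) (if c then a else b) := by
  cases c
  · exact .rule (n := 2) (by simp [rules15]) (.r2 a b)
  · exact .rule (n := 1) (by simp [rules15]) (.r1 a b)

theorem red_pop (c : Bool) (w : W) (a b : Term) :
    Red rules15 (cw (c :: w) (Term.pair a b)) (cw w (if c then a else b)) := by
  cases w with
  | nil => simpa [cw, wt] using red_step (red_proj c a b)
  | cons d w =>
    simp only [cw, wt, reduceCtorEq, if_false]
    exact red_trans (red_assoc (.assoc _ _ _)) (red_step (.comp_right (red_proj c a b)))

theorem red_cw (X : Term) : ∀ w w', sem X w = some w' → Red rules15 (cw w X) (wt w') := by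
  induction X with
  | I =>
    intro w w' h
    simp only [sem, Option.some.injEq] at h
    subst h
    cases w with
    | nil => exact Red.rfl' _
    | cons c w => exact red_step (.rule (n := 5) (by simp [rules15]) (.r5 _))
  | L =>
    intro w w' h
    simp only [sem, Option.some.injEq] at h
    subst h
    have := cw_lt w true
    simp only [lt] at this
    rw [this]; exact Red.rfl' _
  | R =>
    intro w w' h
    simp only [sem, Option.some.injEq] at h
    subst h
    have := cw_lt w false
    simp only [lt] at this
    rw [this]; exact Red.rfl' _
  | comp a b iha ihb =>
    intro w w' h
    rw [sem_comp] at h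
    obtain ⟨w1, h1, h2⟩ := Option.bind_eq_some_iff.1 h
    have e : Red rules15 (cw w (comp a b)) (comp (cw w a) b) := by
      by_cases hw : w = []
      · simp only [cw, hw, if_true]; exact Red.rfl' _
      · simp only [cw, hw, if_false]; exact red_assoc (AssocEq.assoc _ _ _).symm
    exact red_trans e (red_trans (red_comp_left b (iha _ _ h1))
      (red_trans (comp_red_cw w1 b) (ihb _ _ h2)))
  | pair a b iha ihb =>
    intro w w' h
    rcases w with _ | ⟨_ | _, w⟩
    · simp [sem] at h
    · exact red_trans (red_pop false w a b) (ihb _ _ (by simpa [sem] using h))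
    · exact red_trans (red_pop true w a b) (iha _ _ (by simpa [sem] using h))

/-! ### Normal forms -/

/-- built from `L`, `R` by composition only -/
def pure' : Term → Prop
  | Term.I => False
  | Term.L => True
  | Term.R => True
  | Term.comp a b => pure' a ∧ pure' b
  | Term.pair _ _ => False

theorem pure_assoc {a b : Term} (h : AssocEq a b) : pure' a ↔ pure' b := by
  induction h with
  | assoc => simp [pure', and_assoc]
  | refl => rfl
  | symm _ ih => exact ih.symm
  | trans _ _ ih1 ih2 => exact ih1.trans ih2
  | comp_congr _ _ ih1 ih2 => simp [pure', ih1, ih2]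
  | pair_congr => simp [pure']

theorem I_assoc {a b : Term} (h : AssocEq a b) : a = Term.I ↔ b = Term.I := by
  induction h with
  | assoc => simp
  | refl => rfl
  | symm _ ih => exact ih.symm
  | trans _ _ ih1 ih2 => exact ih1.trans ih2
  | comp_congr _ _ ih1 ih2 => simp
  | pair_congr => simp

theorem pure_nostep {a b : Term} (h : Step rules15 a b) : ¬ pure' a := by
  induction h with
  | rule hn hr => cases hr <;> simp [pure']
  | comp_left _ ih => simp [pure', ih]
  | comp_right _ ih => simp [pure', ih]
  | pair_left => simp [pure']
  | pair_right => simp [pure']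

theorem nf_pure {a : Term} (h : pure' a) : NF rules15 a := by
  rintro b ⟨x, y, h1, h2, _⟩
  exact pure_nostep h2 ((pure_assoc h1).1 h)

theorem nf_I : NF rules15 Term.I := by
  rintro b ⟨x, y, h1, h2, _⟩
  have := (I_assoc h1).1 rfl
  subst this
  cases h2 with
  | rule hn hr => cases hr

theorem wt_pure (c : Bool) (w : W) : pure' (wt (c :: w)) := by
  induction w generalizing c with
  | nil => cases c <;> simp [wt, lt, pure']
  | cons d w ih => exact ⟨ih d, by cases c <;> simp [lt, pure']⟩

theorem nf_wt (w : W) : NF rules15 (wt w) := by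
  cases w with
  | nil => exact nf_I
  | cons c w => exact nf_pure (wt_pure c w)

theorem lt_shift (c : Bool) : IsShift (lt c) := by
  cases c
  · exact .right
  · exact .left

theorem wt_shift (w : W) : IsShift (wt w) := by
  induction w with
  | nil => exact .unit
  | cons c w ih =>
    cases w with
    | nil => exact lt_shift c
    | cons d w => exact .comp ih (lt_shift c)

theorem shift_sem {S : Term} (h : IsShift S) : ∀ w, ∃ w', sem S w = some w' := by
  induction h with
  | unit => intro w; simp [sem]
  | left => intro w; simp [sem]
  | right => intro w; simp [sem]
  | comp _ _ ih1 ih2 =>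
    intro w
    obtain ⟨w1, h1⟩ := ih1 w
    obtain ⟨w2, h2⟩ := ih2 w1
    exact ⟨w2, by simp [sem_comp, h1, h2]⟩

theorem sem_wt (w : W) : sem (wt w) [] = some w := by
  induction w with
  | nil => simp [wt, sem]
  | cons c w ih =>
    cases w with
    | nil => cases c <;> simp [wt, lt, sem]
    | cons d w => cases c <;> simp [wt, lt, sem_comp, ih, sem]

theorem nfIsShift_iff (X : Term) : nfIsShift X ↔ sem X [] ≠ none := by
  constructor
  · rintro ⟨N, h, _, hN⟩
    rw [sem_red h]
    obtain ⟨w, hw⟩ := shift_sem hN []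
    simp [hw]
  · intro h
    obtain ⟨w, hw⟩ := Option.ne_none_iff_exists'.1 h
    refine ⟨wt w, ?_, nf_wt w, wt_shift w⟩
    simpa [cw] using red_cw X [] w hw

/-! ### Leaves of normal terms -/

def pairfree : Term → Prop
  | Term.I => True
  | Term.L => True
  | Term.R => True
  | Term.comp a b => pairfree a ∧ pairfree b
  | Term.pair _ _ => False

def good : Term → Prop
  | Term.pair a b => good a ∧ good b
  | t => pairfree t

theorem stepA_comp_right {b c : Term} (a : Term) (h : StepA rules15 b c) :
    StepA rules15 (comp a b) (comp a c) := by
  obtain ⟨x, y, h1, h2, h3⟩ := h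
  exact ⟨_, _, .comp_congr (.refl a) h1, .comp_right h2, .comp_congr (.refl a) h3⟩

theorem stepA_comp_left {a c : Term} (b : Term) (h : StepA rules15 a c) :
    StepA rules15 (comp a b) (comp c b) := by
  obtain ⟨x, y, h1, h2, h3⟩ := h
  exact ⟨_, _, .comp_congr h1 (.refl b), .comp_left h2, .comp_congr h3 (.refl b)⟩

theorem stepA_pair_right {b c : Term} (a : Term) (h : StepA rules15 b c) :
    StepA rules15 (Term.pair a b) (Term.pair a c) := by
  obtain ⟨x, y, h1, h2, h3⟩ := h
  exact ⟨_, _, .pair_congr (.refl a) h1, .pair_right h2, .pair_congr (.refl a) h3⟩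

theorem stepA_pair_left {a c : Term} (b : Term) (h : StepA rules15 a c) :
    StepA rules15 (Term.pair a b) (Term.pair c b) := by
  obtain ⟨x, y, h1, h2, h3⟩ := h
  exact ⟨_, _, .pair_congr h1 (.refl b), .pair_left h2, .pair_congr h3 (.refl b)⟩

theorem stepA_of_step {a b : Term} (h : Step rules15 a b) : StepA rules15 a b :=
  ⟨a, b, .refl a, h, .refl b⟩

theorem pairfree_pair (a : Term) : pairfree a → ∀ x y, ∃ Y, StepA rules15 (comp a (Term.pair x y)) Y := by
  induction a with
  | I => exact fun _ x y => ⟨_, stepA_of_step (.rule (n := 4) (by simp [rules15]) (.r4 _))⟩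
  | L => exact fun _ x y => ⟨_, stepA_of_step (.rule (n := 1) (by simp [rules15]) (.r1 _ _))⟩
  | R => exact fun _ x y => ⟨_, stepA_of_step (.rule (n := 2) (by simp [rules15]) (.r2 _ _))⟩
  | comp a b _ ihb =>
    intro h x y
    obtain ⟨Y, hY⟩ := ihb h.2 x y
    exact ⟨_, stepA_assoc_left (.assoc _ _ _) (stepA_comp_right a hY)⟩
  | pair a b => intro h; exact h.elim

theorem nf_good (t : Term) : NF rules15 t → good t := by
  induction t with
  | I => intro _; trivial
  | L => intro _; trivial
  | R => intro _; trivial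
  | pair a b iha ihb =>
    intro h
    exact ⟨iha fun c hc => h _ (stepA_pair_left b hc), ihb fun c hc => h _ (stepA_pair_right a hc)⟩
  | comp a b iha ihb =>
    intro h
    have ga := iha fun c hc => h _ (stepA_comp_left b hc)
    have gb := ihb fun c hc => h _ (stepA_comp_right a hc)
    have pa : pairfree a := by
      cases a with
      | pair x y => exact (h _ (stepA_of_step (.rule (n := 3) (by simp [rules15]) (.r3 _ _ _)))).elim
      | I => trivial
      | L => trivial
      | R => trivial
      | comp x y => exact ga
    have pb : pairfree b := by
      cases b with
      | pair x y =>
        obtain ⟨Y, hY⟩ := pairfree_pair a pa x y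
        exact (h _ hY).elim
      | I => trivial
      | L => trivial
      | R => trivial
      | comp x y => exact gb
    exact ⟨pa, pb⟩

theorem pairfree_lv (t : Term) : pairfree t → ∃ u, lv t = [([], u)] ∧ ∀ w, sem t w = some (u ++ w) := by
  induction t with
  | I => exact fun _ => ⟨[], rfl, fun w => by simp [sem]⟩
  | L => exact fun _ => ⟨[true], rfl, fun w => by simp [sem]⟩
  | R => exact fun _ => ⟨[false], rfl, fun w => by simp [sem]⟩
  | comp a b iha ihb =>
    intro h
    obtain ⟨u, hu, hs⟩ := iha h.1
    obtain ⟨v, hv, ht⟩ := ihb h.2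
    exact ⟨v ++ u, by simp [lv, hu, hv, lcomp], fun w => by simp [sem_comp, hs, ht]⟩
  | pair a b => intro h; exact h.elim

theorem good_sem (t : Term) : good t → ∀ w,
    (sem t w = none ↔ w ∈ KK (lv t)) ∧ ∀ w', sem t w = some w' ↔ Stp (lv t) w w' := by
  have base : ∀ t, pairfree t → ∀ w,
      (sem t w = none ↔ w ∈ KK (lv t)) ∧ ∀ w', sem t w = some w' ↔ Stp (lv t) w w' := by
    intro t ht w
    obtain ⟨u, hu, hs⟩ := pairfree_lv t ht
    simp only [hu, hs, mem_KK, Stp]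
    constructor
    · simp
    · intro w'; simp [eq_comm]
  induction t with
  | I => exact base _
  | L => exact base _
  | R => exact base _
  | comp a b => exact base _
  | pair a b iha ihb =>
    intro h w
    have ha := iha h.1
    have hb := ihb h.2
    rcases w with _ | ⟨_ | _, w⟩
    · constructor
      · simp only [sem, true_iff]
        -- some leaf exists
        have hne : lv (Term.pair a b) ≠ [] := by
          obtain ⟨ha1, ha2⟩ := ha []
          intro he
          have hl : lv a = [] := by
            simp only [lv, lpair, List.append_eq_nil_iff, List.map_eq_nil_iff] at he
            exact he.1
          rw [hl] at ha1 ha2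
          cases hsem : sem a [] with
          | none => simpa [KK] using ha1.1 hsem
          | some v => simpa [Stp] using (ha2 v).1 hsem
        obtain ⟨r, hr⟩ := List.exists_mem_of_ne_nil _ hne
        rw [mem_KK]
        refine ⟨r, hr, r.1, ?_, rfl⟩
        simp only [lv, lpair, List.mem_append, List.mem_map] at hr
        rcases hr with ⟨s, _, rfl⟩ | ⟨s, _, rfl⟩ <;> simp
      · intro w'
        simp only [sem, reduceCtorEq, false_iff]
        rintro ⟨r, hr, v, e, _⟩
        simp only [lv, lpair, List.mem_append, List.mem_map] at hr
        rcases hr with ⟨s, _, rfl⟩ | ⟨s, _, rfl⟩ <;> simp at e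
    · obtain ⟨h1, h2⟩ := hb w
      constructor
      · simp only [sem]
        rw [h1, mem_KK, mem_KK]
        constructor
        · rintro ⟨r, hr, y, hy, e⟩
          exact ⟨(false :: r.1, r.2), by
            simp only [lv, lpair, List.mem_append, List.mem_map]; exact Or.inr ⟨r, hr, rfl⟩,
            y, hy, by simp [e]⟩
        · rintro ⟨r, hr, y, hy, e⟩
          simp only [lv, lpair, List.mem_append, List.mem_map] at hr
          rcases hr with ⟨s, hs, rfl⟩ | ⟨s, hs, rfl⟩
          · simp at e
          · exact ⟨s, hs, y, hy, by simpa using e⟩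
      · intro w'
        simp only [sem]
        rw [h2 w']
        constructor
        · rintro ⟨r, hr, v, e, e'⟩
          exact ⟨(false :: r.1, r.2), by
            simp only [lv, lpair, List.mem_append, List.mem_map]; exact Or.inr ⟨r, hr, rfl⟩,
            v, by simp [e], e'⟩
        · rintro ⟨r, hr, v, e, e'⟩
          simp only [lv, lpair, List.mem_append, List.mem_map] at hr
          rcases hr with ⟨s, hs, rfl⟩ | ⟨s, hs, rfl⟩
          · simp at e
          · exact ⟨s, hs, v, by simpa using e, e'⟩
    · obtain ⟨h1, h2⟩ := ha w
      constructor
      · simp only [sem]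
        rw [h1, mem_KK, mem_KK]
        constructor
        · rintro ⟨r, hr, y, hy, e⟩
          exact ⟨(true :: r.1, r.2), by
            simp only [lv, lpair, List.mem_append, List.mem_map]; exact Or.inl ⟨r, hr, rfl⟩,
            y, hy, by simp [e]⟩
        · rintro ⟨r, hr, y, hy, e⟩
          simp only [lv, lpair, List.mem_append, List.mem_map] at hr
          rcases hr with ⟨s, hs, rfl⟩ | ⟨s, hs, rfl⟩
          · exact ⟨s, hs, y, hy, by simpa using e⟩
          · simp at e
      · intro w'
        simp only [sem]
        rw [h2 w']
        constructor
        · rintro ⟨r, hr, v, e, e'⟩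
          exact ⟨(true :: r.1, r.2), by
            simp only [lv, lpair, List.mem_append, List.mem_map]; exact Or.inl ⟨r, hr, rfl⟩,
            v, by simp [e], e'⟩
        · rintro ⟨r, hr, v, e, e'⟩
          simp only [lv, lpair, List.mem_append, List.mem_map] at hr
          rcases hr with ⟨s, hs, rfl⟩ | ⟨s, hs, rfl⟩
          · exact ⟨s, hs, v, by simpa using e, e'⟩
          · simp at e

/-! ### Covering is the same as all words being mortal -/

theorem mem_KK_flat (B : List Term) (w : W) :
    w ∈ KK (B.flatMap lv) ↔ ∃ t ∈ B, w ∈ KK (lv t) := by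
  simp only [mem_KK, List.mem_flatMap]
  constructor
  · rintro ⟨r, ⟨t, ht, hr⟩, h⟩; exact ⟨t, ht, r, hr, h⟩
  · rintro ⟨t, ht, r, hr, h⟩; exact ⟨r, ⟨t, ht, hr⟩, h⟩

theorem Stp_flat (B : List Term) (w w' : W) :
    Stp (B.flatMap lv) w w' ↔ ∃ t ∈ B, Stp (lv t) w w' := by
  simp only [Stp, List.mem_flatMap]
  constructor
  · rintro ⟨r, ⟨t, ht, hr⟩, h⟩; exact ⟨t, ht, r, hr, h⟩
  · rintro ⟨t, ht, r, hr, h⟩; exact ⟨r, ⟨t, ht, hr⟩, h⟩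

theorem mortal_iff (B : List Term) (hB : ∀ t ∈ B, NF rules15 t) (w : W) :
    Mortal (B.flatMap lv) w ↔ ∃ l : List Term, (∀ t ∈ l, t ∈ B) ∧ sem (listProd l) w = none := by
  constructor
  · rintro ⟨y, hy, h⟩
    induction h using Relation.ReflTransGen.head_induction_on with
    | refl =>
      obtain ⟨t, ht, hk⟩ := (mem_KK_flat B y).1 hy
      refine ⟨[t], by simpa using ht, ?_⟩
      have := ((good_sem t (nf_good t (hB t ht)) y).1).2 hk
      simp [listProd, sem_comp, this]
    | head h _ ih =>
      obtain ⟨t, ht, hs⟩ := (Stp_flat B _ _).1 h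
      obtain ⟨l, hl, hn⟩ := ih
      refine ⟨t :: l, by simpa using ⟨ht, hl⟩, ?_⟩
      have := ((good_sem t (nf_good t (hB t ht)) _).2 _).2 hs
      simp [listProd, sem_comp, this, hn]
  · rintro ⟨l, hl, hn⟩
    induction l generalizing w with
    | nil => simp [listProd, sem] at hn
    | cons t l ih =>
      have ht : t ∈ B := hl t (by simp)
      have g := good_sem t (nf_good t (hB t ht)) w
      rw [listProd, sem_comp] at hn
      cases hw : sem t w with
      | none => exact ⟨w, (mem_KK_flat B w).2 ⟨t, ht, g.1.1 hw⟩, .refl⟩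
      | some w' =>
        rw [hw, Option.bind_some] at hn
        obtain ⟨y, hy, hr⟩ := ih w' (fun s hs => hl s (by simp [hs])) hn
        exact ⟨y, hy, .head ((Stp_flat B _ _).2 ⟨t, ht, (g.2 w').1 hw⟩) hr⟩

theorem sem_listProd_append (l m : List Term) (w : W) :
    sem (listProd (l ++ m)) w = (sem (listProd l) w).bind (sem (listProd m)) := by
  induction l generalizing w with
  | nil => simp [listProd, sem]
  | cons t l ih =>
    simp only [List.cons_append, listProd, sem_comp]
    cases sem t w <;> simp [ih, sem_comp]

/-- greedy concatenation -/
def build (b : Term) (k : W → List Term) : ℕ → List Term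
  | 0 => []
  | n + 1 => build b k n ++
      ((match (Encodable.decode (α := W) n).bind (sem (listProd (build b k n))) with
        | none => []
        | some w' => k w') ++ [b])

theorem build_prefix (b : Term) (k : W → List Term) {m n : ℕ} (h : m ≤ n) :
    build b k m <+: build b k n := by
  induction h with
  | refl => exact List.prefix_refl _
  | step _ ih => exact ih.trans (by rw [build]; exact List.prefix_append _ _)

theorem build_length (b : Term) (k : W → List Term) (n : ℕ) : n ≤ (build b k n).length := by
  induction n with
  | zero => simp
  | succ n ih => rw [build]; simp only [List.length_append, List.length_singleton]; omega

theorem build_mem (B : List Term) (b : Term) (hb : b ∈ B) (k : W → List Term)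
    (hk : ∀ w, ∀ t ∈ k w, t ∈ B) (n : ℕ) : ∀ t ∈ build b k n, t ∈ B := by
  induction n with
  | zero => simp [build]
  | succ n ih =>
    intro t ht
    rw [build] at ht
    simp only [List.mem_append, List.mem_singleton] at ht
    rcases ht with ht | ht | rfl
    · exact ih t ht
    · split at ht
      · simp at ht
      · exact hk _ t ht
    · exact hb

theorem build_kill (b : Term) (k : W → List Term) (hk : ∀ w, sem (listProd (k w)) w = none) (w : W) :
    sem (listProd (build b k (Encodable.encode w + 1))) w = none := by
  rw [build, sem_listProd_append]
  cases h : sem (listProd (build b k (Encodable.encode w))) w with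
  | none => rfl
  | some w' =>
    rw [Option.bind_some, Encodable.encodek, Option.bind_some, h, sem_listProd_append]
    simp [hk]

theorem covers_iff (B : List Term) (hB : ∀ t ∈ B, NF rules15 t) :
    Covers B ↔ ∀ w, Mortal (B.flatMap lv) w := by
  constructor
  · rintro ⟨f, hf, h⟩ w
    obtain ⟨n, hn⟩ := h (wt w) (wt_shift w)
    rw [nfIsShift_iff, not_not, sem_comp, sem_wt, Option.bind_some] at hn
    refine (mortal_iff B hB w).2 ⟨_, ?_, hn⟩
    simp only [List.mem_map]
    rintro t ⟨i, _, rfl⟩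
    exact hf i
  · intro h
    have h' := fun w => (mortal_iff B hB w).1 (h w)
    choose k hkB hk using h'
    obtain ⟨b, hb⟩ : ∃ b, b ∈ B := by
      obtain ⟨y, hy, _⟩ := h []
      obtain ⟨t, ht, _⟩ := (mem_KK_flat B y).1 hy
      exact ⟨t, ht⟩
    have hlt : ∀ n, n < (build b k (n + 1)).length := fun n => build_length b k (n + 1)
    refine ⟨fun n => (build b k (n + 1))[n]'(hlt n), ?_, ?_⟩
    · intro n
      exact build_mem B b hb k hkB (n + 1) _ (List.getElem_mem _)
    · intro S hS
      obtain ⟨w, hw⟩ := shift_sem hS []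
      refine ⟨(build b k (Encodable.encode w + 1)).length, ?_⟩
      rw [nfIsShift_iff, not_not, sem_comp, hw, Option.bind_some]
      have e : (List.range (build b k (Encodable.encode w + 1)).length).map
          (fun n => (build b k (n + 1))[n]'(hlt n)) = build b k (Encodable.encode w + 1) := by
        apply List.ext_getElem
        · simp
        · intro i h1 h2
          simp only [List.getElem_map, List.getElem_range]
          rcases le_total (i + 1) (Encodable.encode w + 1) with hle | hle
          · exact (build_prefix b k hle).getElem _
          · exact ((build_prefix b k hle).getElem _).symm
      rw [prodTake, e]
      exact build_kill b k hk w

end CovDec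

/-- Theorem 5: it is decidable (uniformly in the finite set `B` of terms in
CQ normal form) whether `B` covers Cantor space. -/
theorem covers_cantor_space_decidable :
    ∃ g : ℕ → Bool, Computable g ∧
      ∀ B : List Term, (∀ t ∈ B, NF rules15 t) →
        (g (encodeTermList B) = true ↔ Covers B) := by
  classical
  refine ⟨fun n => decide (CovDec.Dec (CovDec.rulesN n)), ?_, ?_⟩
  · exact (CovDec.p_Dec.comp CovDec.p_rulesN).decide.to_comp
  · intro B hB
    rw [decide_eq_true_iff, CovDec.rulesN_encode, CovDec.Dec_iff, CovDec.covers_iff B hB]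
end

section
/- The set of bad shifts is recursive uniformly in B: there is an algorithm which, given a finite set B of terms in CQ normal form and a shift S, decides whether S is bad for B. -/
open Term

namespace BadShift

/-- The partial right action of terms on words (top letter first, `false` is `L`):
`act X w` is the word of `w * X` if this is a shift. -/
def act : Term → List Bool → Option (List Bool)
  | I, w => some w
  | L, w => some (false :: w)
  | R, w => some (true :: w)
  | comp a b, w => (act a w).bind (act b)
  | pair _ _, [] => none
  | pair a _, false :: w => act a w
  | pair _ b, true :: w => act b w

/-- Iterated action. -/
def actL : List Term → List Bool → Option (List Bool)
  | [], w => some w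
  | t :: l, w => (act t w).bind (actL l)

theorem act_assocEq {a b : Term} (h : AssocEq a b) : ∀ w, act a w = act b w := by
  induction h with
  | assoc a b c =>
    intro w
    simp only [act, Option.bind_assoc]
  | refl a => intro w; rfl
  | symm _ ih => intro w; rw [ih]
  | trans _ _ ih1 ih2 => intro w; rw [ih1, ih2]
  | comp_congr _ _ ih1 ih2 =>
    intro w
    simp only [act, ih1]
    congr 1
    funext v
    exact ih2 v
  | pair_congr _ _ ih1 ih2 =>
    intro w
    rcases w with _ | ⟨_ | _, w⟩
    · rfl
    · exact ih1 w
    · exact ih2 w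

theorem act_rule {n : ℕ} {a b : Term} (hn : n ∈ rules15) (h : Rule n a b) :
    ∀ w, act a w = act b w := by
  intro w
  cases h with
  | r1 x y => simp [act]
  | r2 x y => simp [act]
  | r3 x y z =>
    rcases w with _ | ⟨_ | _, w⟩ <;> simp [act]
  | r4 x => simp [act]
  | r5 x =>
    simp only [act]
    cases act b w <;> simp [act]
  | r6 x => simp [rules15] at hn
  | r7 => simp [rules15] at hn

theorem act_step {a b : Term} (h : Step rules15 a b) : ∀ w, act a w = act b w := by
  induction h with
  | rule hn h => exact act_rule hn h
  | comp_left _ ih => intro w; simp only [act, ih]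
  | comp_right _ ih =>
    intro w
    simp only [act]
    congr 1
    funext v
    exact ih v
  | pair_left _ ih =>
    intro w
    rcases w with _ | ⟨_ | _, w⟩
    · rfl
    · exact ih w
    · rfl
  | pair_right _ ih =>
    intro w
    rcases w with _ | ⟨_ | _, w⟩
    · rfl
    · rfl
    · exact ih w

theorem act_red {a b : Term} (h : Red rules15 a b) : ∀ w, act a w = act b w := by
  obtain ⟨c, h1, h2⟩ := h
  intro w
  rw [← act_assocEq h2 w]
  clear h2
  induction h1 with
  | refl => rfl
  | tail _ h ih =>
    obtain ⟨x, y, hx, hs, hy⟩ := h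
    rw [ih, act_assocEq hx, act_step hs, act_assocEq hy]

theorem act_shift {s : Term} (h : IsShift s) : ∀ w, act s w ≠ none := by
  induction h with
  | unit => intro w; simp [act]
  | left => intro w; simp [act]
  | right => intro w; simp [act]
  | @comp s t _ _ ih1 ih2 =>
    intro w
    simp only [act]
    obtain ⟨v, hv⟩ := Option.ne_none_iff_exists'.1 (ih1 w)
    rw [hv]
    exact ih2 v

/-! ### Reduction lemmas -/

theorem red_of_assoc {a b : Term} (h : AssocEq a b) : Red rules15 a b :=
  ⟨a, Relation.ReflTransGen.refl, h⟩

theorem red_refl (a : Term) : Red rules15 a a := red_of_assoc (AssocEq.refl a)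

theorem red_of_step {a b : Term} (h : Step rules15 a b) : Red rules15 a b :=
  ⟨b, Relation.ReflTransGen.single ⟨a, b, AssocEq.refl a, h, AssocEq.refl b⟩, AssocEq.refl b⟩

theorem red_assoc_left {a b c : Term} (h : AssocEq a b) (h2 : Red rules15 b c) :
    Red rules15 a c := by
  obtain ⟨d, h3, h4⟩ := h2
  rcases Relation.ReflTransGen.cases_head h3 with h5 | ⟨e, h5, h6⟩
  · subst h5
    exact red_of_assoc (h.trans h4)
  · obtain ⟨x, y, hx, hs, hy⟩ := h5
    exact ⟨d, Relation.ReflTransGen.head ⟨x, y, h.trans hx, hs, hy⟩ h6, h4⟩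

theorem red_trans {a b c : Term} (h : Red rules15 a b) (h2 : Red rules15 b c) :
    Red rules15 a c := by
  obtain ⟨d, h3, h4⟩ := h
  obtain ⟨e, h5, h6⟩ := red_assoc_left h4 h2
  exact ⟨e, h3.trans h5, h6⟩

theorem red_comp_left {a a' : Term} (b : Term) (h : Red rules15 a a') :
    Red rules15 (comp a b) (comp a' b) := by
  obtain ⟨c, h1, h2⟩ := h
  refine ⟨comp c b, ?_, AssocEq.comp_congr h2 (AssocEq.refl b)⟩
  refine Relation.ReflTransGen.lift (r := StepA rules15) (fun x => comp x b) ?_ _ _ h1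
  rintro x y ⟨x', y', hx, hs, hy⟩
  exact ⟨comp x' b, comp y' b, AssocEq.comp_congr hx (AssocEq.refl b), Step.comp_left hs,
    AssocEq.comp_congr hy (AssocEq.refl b)⟩

/-- The letter of a Boolean. -/
def letter (b : Bool) : Term := if b then R else L

/-- The normal shift of a word (top letter first). -/
def rb : List Bool → Term
  | [] => I
  | [b] => letter b
  | b :: c :: w => comp (rb (c :: w)) (letter b)

/-- Composition with a word on the left, avoiding the unit. -/
def cw : List Bool → Term → Term
  | [], X => X
  | b :: w, X => comp (rb (b :: w)) X

theorem rb_cons (b : Bool) (w : List Bool) : rb (b :: w) = cw w (letter b) := by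
  cases w <;> rfl

theorem red_cw (w : List Bool) (X : Term) : Red rules15 (comp (rb w) X) (cw w X) := by
  cases w with
  | nil => exact red_of_step (Step.rule (n := 4) (by simp [rules15]) (Rule.r4 X))
  | cons b w => exact red_refl _

theorem red_of_act (X : Term) : ∀ w w', act X w = some w' → Red rules15 (cw w X) (rb w') := by
  induction X with
  | I =>
    intro w w' h
    simp only [act, Option.some.injEq] at h
    subst h
    cases w with
    | nil => exact red_refl _
    | cons b w => exact red_of_step (Step.rule (n := 5) (by simp [rules15]) (Rule.r5 _))
  | L =>
    intro w w' h
    simp only [act, Option.some.injEq] at h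
    subst h
    rw [rb_cons]
    exact red_refl _
  | R =>
    intro w w' h
    simp only [act, Option.some.injEq] at h
    subst h
    rw [rb_cons]
    exact red_refl _
  | comp a b iha ihb =>
    intro w w' h
    simp only [act, Option.bind_eq_some_iff] at h
    obtain ⟨v, hv, h⟩ := h
    have h1 : Red rules15 (cw w (comp a b)) (comp (cw w a) b) := by
      cases w with
      | nil => exact red_refl _
      | cons c w => exact red_of_assoc (AssocEq.assoc _ _ _).symm
    exact red_trans h1 (red_trans (red_comp_left b (iha w v hv))
      (red_trans (red_cw v b) (ihb v w' h)))
  | pair a b iha ihb =>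
    intro w w' h
    rcases w with _ | ⟨c, w⟩
    · simp [act] at h
    · have key : ∀ Y, Step rules15 (comp (letter c) (pair a b)) Y →
          Red rules15 (cw (c :: w) (pair a b)) (cw w Y) := by
        intro Y hY
        cases w with
        | nil => exact red_of_step hY
        | cons d w =>
          exact red_assoc_left (AssocEq.assoc _ _ _) (red_of_step (Step.comp_right hY))
      cases c with
      | false =>
        exact red_trans (key a (Step.rule (n := 1) (by simp [rules15]) (Rule.r1 a b)))
          (iha w w' h)
      | true =>
        exact red_trans (key b (Step.rule (n := 2) (by simp [rules15]) (Rule.r2 a b)))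
          (ihb w w' h)

/-- No unit and no pair occurs. -/
def noIP : Term → Prop
  | I => False
  | L => True
  | R => True
  | comp a b => noIP a ∧ noIP b
  | pair _ _ => False

theorem noIP_assoc {a b : Term} (h : AssocEq a b) : noIP a ↔ noIP b := by
  induction h with
  | assoc a b c => simp [noIP, and_assoc]
  | refl a => rfl
  | symm _ ih => exact ih.symm
  | trans _ _ ih1 ih2 => exact ih1.trans ih2
  | comp_congr _ _ ih1 ih2 => simp [noIP, ih1, ih2]
  | pair_congr _ _ ih1 ih2 => simp [noIP]

theorem isI_assoc {a b : Term} (h : AssocEq a b) : a = I ↔ b = I := by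
  induction h with
  | symm _ ih => exact ih.symm
  | trans _ _ ih1 ih2 => exact ih1.trans ih2
  | _ => simp

theorem noIP_step {a b : Term} (h : Step rules15 a b) : ¬ noIP a := by
  induction h with
  | rule hn h => cases h <;> simp [noIP, rules15] at hn ⊢
  | comp_left _ ih => simp only [noIP]; tauto
  | comp_right _ ih => simp only [noIP]; tauto
  | pair_left _ ih => simp [noIP]
  | pair_right _ ih => simp [noIP]

theorem I_step {b : Term} (h : Step rules15 I b) : False := by
  cases h with
  | rule hn h => cases h

theorem rb_noIP (w : List Bool) : w = [] ∨ noIP (rb w) := by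
  induction w with
  | nil => exact Or.inl rfl
  | cons b w ih =>
    right
    have hb : noIP (letter b) := by cases b <;> simp [letter, noIP]
    cases w with
    | nil => exact hb
    | cons c w =>
      refine ⟨?_, hb⟩
      simpa using ih

theorem rb_NF (w : List Bool) : NF rules15 (rb w) := by
  rintro b ⟨x, y, hx, hs, hy⟩
  rcases rb_noIP w with rfl | h
  · have := (isI_assoc hx).1 rfl
    subst this
    exact I_step hs
  · exact noIP_step hs ((noIP_assoc hx).1 h)

theorem rb_shift (w : List Bool) : IsShift (rb w) := by
  induction w with
  | nil => exact IsShift.unit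
  | cons b w ih =>
    have hb : IsShift (letter b) := by
      cases b
      · exact IsShift.left
      · exact IsShift.right
    cases w with
    | nil => exact hb
    | cons c w => exact IsShift.comp ih hb

theorem nfIsShift_iff (X : Term) : nfIsShift X ↔ act X [] ≠ none := by
  constructor
  · rintro ⟨N, h1, _, h3⟩
    rw [act_red h1]
    exact act_shift h3 []
  · intro h
    obtain ⟨w, hw⟩ := Option.ne_none_iff_exists'.1 h
    exact ⟨rb w, red_of_act X [] w hw, rb_NF w, rb_shift w⟩

theorem act_listProd (l : List Term) : ∀ w, act (listProd l) w = actL l w := by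
  induction l with
  | nil => intro w; rfl
  | cons t l ih =>
    intro w
    simp only [listProd, act, actL]
    congr 1
    funext v
    exact ih v

theorem badFor_iff (B : List Term) (S : Term) :
    BadFor B S ↔ ∀ l : List Term, (∀ t ∈ l, t ∈ B) → actL (S :: l) [] ≠ none := by
  unfold BadFor
  refine forall_congr' fun l => forall_congr' fun _ => ?_
  rw [nfIsShift_iff, ← act_listProd]
  rfl

/-! ### Finiteness -/

theorem act_append {t : Term} : ∀ {w q : List Bool}, act t w = some q → ∀ v,
    act t (w ++ v) = some (q ++ v) := by
  induction t with
  | I => intro w q h v; simp_all [act]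
  | L => intro w q h v; simp only [act, Option.some.injEq] at h; subst h; simp [act]
  | R => intro w q h v; simp only [act, Option.some.injEq] at h; subst h; simp [act]
  | comp a b iha ihb =>
    intro w q h v
    simp only [act, Option.bind_eq_some_iff] at h ⊢
    obtain ⟨u, h1, h2⟩ := h
    exact ⟨u ++ v, iha h1 v, ihb h2 v⟩
  | pair a b iha ihb =>
    intro w q h v
    rcases w with _ | ⟨_ | _, w⟩
    · simp [act] at h
    · exact iha (w := w) h v
    · exact ihb (w := w) h v

theorem actL_append {l : List Term} : ∀ {w q : List Bool}, actL l w = some q → ∀ v,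
    actL l (w ++ v) = some (q ++ v) := by
  induction l with
  | nil => intro w q h v; simp_all [actL]
  | cons t l ih =>
    intro w q h v
    simp only [actL, Option.bind_eq_some_iff] at h ⊢
    obtain ⟨u, h1, h2⟩ := h
    exact ⟨u ++ v, act_append h1 v, ih h2 v⟩

theorem actL_concat (l l' : List Term) : ∀ w, actL (l ++ l') w = (actL l w).bind (actL l') := by
  induction l with
  | nil => intro w; rfl
  | cons t l ih =>
    intro w
    simp only [List.cons_append, actL, Option.bind_assoc]
    congr 1
    funext v
    exact ih v

theorem act_long (t : Term) : ∃ m : ℕ, ∀ w : List Bool, m ≤ w.length →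
    ∃ q, act t w = some q ∧ w.length ≤ q.length + m := by
  induction t with
  | I => exact ⟨0, fun w _ => ⟨w, rfl, by simp⟩⟩
  | L => exact ⟨0, fun w _ => ⟨_, rfl, by simp⟩⟩
  | R => exact ⟨0, fun w _ => ⟨_, rfl, by simp⟩⟩
  | comp a b iha ihb =>
    obtain ⟨m, hm⟩ := iha
    obtain ⟨n, hn⟩ := ihb
    refine ⟨m + n, fun w hw => ?_⟩
    obtain ⟨q, hq, hl⟩ := hm w (by omega)
    obtain ⟨r, hr, hl'⟩ := hn q (by omega)
    exact ⟨r, by simp [act, hq, hr], by omega⟩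
  | pair a b iha ihb =>
    obtain ⟨m, hm⟩ := iha
    obtain ⟨n, hn⟩ := ihb
    refine ⟨m + n + 1, fun w hw => ?_⟩
    rcases w with _ | ⟨_ | _, w⟩
    · simp at hw
    · simp only [List.length_cons] at hw ⊢
      obtain ⟨q, hq, hl⟩ := hm w (by omega)
      exact ⟨q, hq, by omega⟩
    · simp only [List.length_cons] at hw ⊢
      obtain ⟨q, hq, hl⟩ := hn w (by omega)
      exact ⟨q, hq, by omega⟩

theorem act_long_list (B : List Term) : ∃ m : ℕ, ∀ t ∈ B, ∀ w : List Bool, m ≤ w.length →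
    act t w ≠ none := by
  induction B with
  | nil => exact ⟨0, by simp⟩
  | cons t B ih =>
    obtain ⟨m, hm⟩ := ih
    obtain ⟨n, hn⟩ := act_long t
    refine ⟨m + n, ?_⟩
    intro t' ht w hw
    rcases List.mem_cons.1 ht with rfl | ht
    · obtain ⟨q, hq, _⟩ := hn w (by omega)
      simp [hq]
    · exact hm t' ht w (by omega)

/-- Bad words. -/
def BadW (B : List Term) (w : List Bool) : Prop :=
  ∀ l : List Term, (∀ t ∈ l, t ∈ B) → actL l w ≠ none

theorem badW_step {B : List Term} {t : Term} {w q : List Bool} (hw : BadW B w) (ht : t ∈ B)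
    (h : act t w = some q) : BadW B q := by
  intro l hl
  have := hw (t :: l) (by simpa using ⟨ht, hl⟩)
  simpa [actL, h] using this

theorem badW_ne_none {B : List Term} {t : Term} {w : List Bool} (hw : BadW B w) (ht : t ∈ B) :
    act t w ≠ none := by
  have := hw [t] (by simpa using ht)
  intro h
  simp [actL, h] at this

theorem badW_append_iff (B : List Term) (v : List Bool) (u : List Bool) :
    BadW B (u ++ v) ↔ ∀ z, (∃ t ∈ B, act t z = none) →
      (∃ l : List Term, (∀ t ∈ l, t ∈ B) ∧ actL l u = some z) → BadW B (z ++ v) := by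
  constructor
  · rintro h z _ ⟨l, hl, hz⟩ l' hl'
    have h1 := h (l ++ l') (by
      intro t ht
      rcases List.mem_append.1 ht with ht | ht
      · exact hl t ht
      · exact hl' t ht)
    rw [actL_concat, actL_append hz v] at h1
    exact h1
  · intro h l
    induction l generalizing u with
    | nil => intro _; simp [actL]
    | cons t l ih =>
      intro hl
      have ht : t ∈ B := hl t (by simp)
      have hl' : ∀ s ∈ l, s ∈ B := fun s hs => hl s (by simp [hs])
      rcases hq : act t u with _ | q
      · exact h u ⟨t, ht, hq⟩ ⟨[], by simp, rfl⟩ (t :: l) hl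
      · simp only [actL, act_append hq v, Option.bind_some]
        refine ih q ?_ hl'
        rintro z hz ⟨l1, hl1, hz1⟩
        refine h z hz ⟨t :: l1, by simpa using ⟨ht, hl1⟩, ?_⟩
        simp [actL, hq, hz1]

/-- The class of a bottom word. -/
def cls (B : List Term) (v : List Bool) : Set (List Bool) := {u | BadW B (u ++ v)}

theorem cls_finite (B : List Term) : (Set.range (cls B)).Finite := by
  obtain ⟨m, hm⟩ := act_long_list B
  let P : Set (List Bool) := {z | ∃ t ∈ B, act t z = none}
  have hP : P.Finite := by
    refine (List.finite_length_lt Bool m).subset ?_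
    rintro z ⟨t, ht, hz⟩
    by_contra hlt
    exact hm t ht z (by simpa using hlt) hz
  let h : Set (List Bool) → Set (List Bool) := fun K =>
    {u | ∀ z ∈ P, (∃ l : List Term, (∀ t ∈ l, t ∈ B) ∧ actL l u = some z) → z ∈ K}
  refine ((hP.finite_subsets).image h).subset ?_
  rintro _ ⟨v, rfl⟩
  refine ⟨{z | z ∈ P ∧ BadW B (z ++ v)}, fun z hz => hz.1, ?_⟩
  ext u
  simp only [cls, h, Set.mem_ofPred_eq]
  rw [badW_append_iff]
  constructor
  · intro H z hz hl
    exact (H z hz hl).2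
  · intro H z hz hl
    exact ⟨hz, H z hz hl⟩

theorem cls_cons {B : List Term} {v v' : List Bool} (h : cls B v = cls B v') (b : Bool) :
    cls B (b :: v) = cls B (b :: v') := by
  ext u
  have := Set.ext_iff.1 h (u ++ [b])
  simpa [cls] using this

theorem cls_bad {B : List Term} {v v' : List Bool} (h : cls B v = cls B v') :
    BadW B v ↔ BadW B v' := by
  have := Set.ext_iff.1 h []
  simpa [cls] using this

/-! ### Automata as certificates -/

/-- Transition table: state `x` reads `b`. -/
def del (s : ℕ) (t : List ℕ) (x : ℕ) (b : Bool) : ℕ :=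
  t.getD (3 * x + cond b 1 0) 0 % (s + 1)

/-- Run, bottom letter first. -/
def st (s : ℕ) (t : List ℕ) (x : ℕ) (w : List Bool) : ℕ :=
  w.foldr (fun b y => del s t y b) x

/-- Acceptance. -/
def acc (t : List ℕ) (x : ℕ) : Prop := t.getD (3 * x + 2) 0 = 1

/-- All words of length at most `m`. -/
def words : ℕ → List (List Bool)
  | 0 => [[]]
  | m + 1 => [] :: (words m).flatMap fun w => [false :: w, true :: w]

theorem mem_words {m : ℕ} : ∀ {w : List Bool}, w ∈ words m ↔ w.length ≤ m := by
  induction m with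
  | zero => intro w; simp [words]
  | succ m ih =>
    intro w
    rcases w with _ | ⟨_ | _, w⟩ <;> simp [words, ih]

/-- The certificate for badness. -/
def Cert (B : List Term) (S : Term) (m s x0 : ℕ) (t : List ℕ) : Prop :=
  x0 ≤ s ∧ (∃ w, act S [] = some w ∧ acc t (st s t x0 w)) ∧
  ∀ F ∈ B, ∀ p ∈ words m,
    (act F p = none ∧ ¬ acc t (st s t x0 p) ∧ p.length < m) ∨
    (∃ q, act F p = some q ∧ ∀ x < s + 1, acc t (st s t x p) → acc t (st s t x q))

theorem st_append (s : ℕ) (t : List ℕ) (x : ℕ) (u v : List Bool) :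
    st s t x (u ++ v) = st s t (st s t x v) u := by
  simp [st]

theorem st_lt {s x : ℕ} (t : List ℕ) (hx : x ≤ s) (v : List Bool) : st s t x v < s + 1 := by
  cases v with
  | nil => exact Nat.lt_succ_of_le hx
  | cons b v => exact Nat.mod_lt _ (Nat.succ_pos s)

theorem cert_sound {B : List Term} {S : Term} {m s x0 : ℕ} {t : List ℕ}
    (h : Cert B S m s x0 t) : BadFor B S := by
  obtain ⟨h0, ⟨w, hw, hacc⟩, h2⟩ := h
  rw [badFor_iff]
  intro l hl
  simp only [actL, hw, Option.bind_some]
  clear hw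
  induction l generalizing w with
  | nil => simp [actL]
  | cons F l ih =>
    have hF : F ∈ B := hl F (by simp)
    have hp : w.take m ∈ words m := mem_words.2 (by simp)
    rcases h2 F hF _ hp with ⟨h3, h4, h5⟩ | ⟨q, h3, h4⟩
    · have : w.take m = w := List.take_of_length_le (by
        simp only [List.length_take] at h5; omega)
      rw [this] at h4
      exact absurd hacc h4
    · have h5 := act_append h3 (w.drop m)
      rw [List.take_append_drop] at h5
      simp only [actL, h5, Option.bind_some]
      refine ih _ ?_ (fun s hs => hl s (by simp [hs]))
      rw [st_append]
      apply h4 _ (st_lt t h0 _)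
      rw [← st_append, List.take_append_drop]
      exact hacc

theorem cert_complete {B : List Term} {S : Term} (h : BadFor B S) :
    ∃ m s x0 t, Cert B S m s x0 t := by
  classical
  rw [badFor_iff] at h
  have hS := h [] (by simp)
  obtain ⟨w0, hw0⟩ : ∃ w0, act S [] = some w0 := by
    rcases hq : act S [] with _ | q
    · simp [actL, hq] at hS
    · exact ⟨q, rfl⟩
  have hbad : BadW B w0 := by
    intro l hl
    have := h l hl
    simpa [actL, hw0] using this
  obtain ⟨m, hm⟩ := act_long_list B
  have : Finite (Set.range (cls B)) := cls_finite B
  obtain ⟨n, ⟨e⟩⟩ := Finite.exists_equiv_fin (Set.range (cls B))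
  let idx : List Bool → ℕ := fun v => (e ⟨cls B v, v, rfl⟩ : Fin n)
  have idx_lt : ∀ v, idx v < n := fun v => (e _).2
  have idx_eq : ∀ v v', idx v = idx v' → cls B v = cls B v' := by
    intro v v' hv
    have := e.injective (Fin.ext hv)
    exact congrArg Subtype.val this
  have idx_congr : ∀ v v', cls B v = cls B v' → idx v = idx v' := by
    intro v v' hv
    simp only [idx, hv]
  have hrep : ∀ x : ℕ, ∃ v, x < n → idx v = x := by
    intro x
    by_cases hx : x < n
    · obtain ⟨⟨_, v, rfl⟩, hv⟩ := e.surjective ⟨x, hx⟩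
      exact ⟨v, fun _ => by simp only [idx, hv]⟩
    · exact ⟨[], fun h => absurd h hx⟩
  choose rep hrep using hrep
  have hn : 0 < n := Nat.lt_of_le_of_lt (Nat.zero_le _) (idx_lt [])
  let φ : ℕ → ℕ := fun i =>
    if i % 3 = 0 then idx (false :: rep (i / 3))
    else if i % 3 = 1 then idx (true :: rep (i / 3))
    else if BadW B (rep (i / 3)) then 1 else 0
  let t : List ℕ := (List.range (3 * n)).map φ
  have ht : ∀ i < 3 * n, t.getD i 0 = φ i := by
    intro i hi
    simp [t, List.getD_eq_getElem?_getD, hi]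
  have hdel : ∀ v b, del (n - 1) t (idx v) b = idx (b :: v) := by
    intro v b
    have hlt := idx_lt v
    have hc : cls B (rep (idx v)) = cls B v := idx_eq _ _ (hrep _ hlt)
    have hc' := idx_congr _ _ (cls_cons hc b)
    unfold del
    have hb : 3 * idx v + cond b 1 0 < 3 * n := by cases b <;> simp <;> omega
    rw [ht _ hb]
    have : φ (3 * idx v + cond b 1 0) = idx (b :: rep (idx v)) := by
      cases b
      · have h1 : (3 * idx v + 0) % 3 = 0 := by omega
        have h2 : (3 * idx v + 0) / 3 = idx v := by omega
        simp only [φ, cond_false, h1, h2, if_true]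
      · have h1 : (3 * idx v + 1) % 3 = 1 := by omega
        have h2 : (3 * idx v + 1) / 3 = idx v := by omega
        simp only [φ, cond_true, h1, h2, one_ne_zero, if_false, if_true]
    rw [this, hc', Nat.sub_add_cancel hn, Nat.mod_eq_of_lt (idx_lt _)]
  have hst : ∀ v u, st (n - 1) t (idx v) u = idx (u ++ v) := by
    intro v u
    induction u with
    | nil => rfl
    | cons b u ih =>
      have : st (n - 1) t (idx v) (b :: u) = del (n - 1) t (st (n - 1) t (idx v) u) b := rfl
      rw [this, ih, hdel]
      rfl
  have hacc : ∀ v, acc t (idx v) ↔ BadW B v := by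
    intro v
    have hlt := idx_lt v
    have hc : cls B (rep (idx v)) = cls B v := idx_eq _ _ (hrep _ hlt)
    unfold acc
    rw [ht _ (by omega), ← cls_bad hc]
    have h1 : (3 * idx v + 2) % 3 = 2 := by omega
    have h2 : (3 * idx v + 2) / 3 = idx v := by omega
    simp only [φ, h1, h2]
    simp
  refine ⟨m, n - 1, idx [], t, ?_, ⟨w0, hw0, ?_⟩, ?_⟩
  · have := idx_lt []
    omega
  · rw [hst, hacc]
    simpa using hbad
  · intro F hF p hp
    rcases hq : act F p with _ | q
    · left
      refine ⟨rfl, ?_, ?_⟩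
      · rw [hst, hacc, List.append_nil]
        exact fun hb => badW_ne_none hb hF hq
      · by_contra hlt
        exact hm F hF p (by simpa using hlt) hq
    · right
      refine ⟨q, rfl, ?_⟩
      intro x hx
      rw [Nat.sub_add_cancel hn] at hx
      rw [← hrep x hx, hst, hst, hacc, hacc]
      exact fun hb => badW_step hb hF (act_append hq _)

/-! ### Evaluation on codes -/

/-- Process the top instruction `c` with continuation `k` and word `w`. -/
def body (c : ℕ) (k : List ℕ) (w : List Bool) : Option (List ℕ × List Bool) :=
  if c = 0 then some (k, w)
  else if c = 1 then some (k, false :: w)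
  else if c = 2 then some (k, true :: w)
  else if (c - 3) % 2 = 0 then
    some (((c - 3) / 2).unpair.1 :: ((c - 3) / 2).unpair.2 :: k, w)
  else w.head?.map fun d =>
    (cond d ((c - 3) / 2).unpair.2 ((c - 3) / 2).unpair.1 :: k, w.tail)

/-- One step of the machine. -/
def stepC (c : List ℕ × List Bool) : Option (List ℕ × List Bool) :=
  List.casesOn c.1 (some c) (fun h k => body h k c.2)

/-- Evaluate a code on a word. -/
def ev (c : ℕ) (w : List Bool) : Option (List Bool) :=
  ((fun o : Option (List ℕ × List Bool) => o.bind stepC)^[c + 1] (some ([c], w))).map Prod.snd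

theorem iter_none (n : ℕ) :
    (fun o : Option (List ℕ × List Bool) => o.bind stepC)^[n] none = none := by
  induction n with
  | zero => rfl
  | succ n ih => rw [Function.iterate_succ_apply]; exact ih

theorem run_spec (n : ℕ) : ∀ (k : List Term) (w : List Bool),
    ((k.map encodeTerm).map Nat.succ).sum ≤ n →
    (fun o : Option (List ℕ × List Bool) => o.bind stepC)^[n] (some (k.map encodeTerm, w)) =
      (actL k w).map fun q => ([], q) := by
  induction n with
  | zero =>
    intro k w h
    cases k with
    | nil => rfl
    | cons t k => simp at h
  | succ n ih =>
    intro k w h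
    rw [Function.iterate_succ_apply]
    cases k with
    | nil =>
      have := ih [] w (by simp)
      exact this
    | cons t k =>
      simp only [List.map_cons, List.sum_cons, Nat.succ_eq_add_one] at h
      change (fun o : Option (List ℕ × List Bool) => o.bind stepC)^[n]
        (body (encodeTerm t) (k.map encodeTerm) w) = _
      cases t with
      | I =>
        simp only [body, encodeTerm, if_true]
        rw [ih k w (by omega)]
        rfl
      | L =>
        simp only [body, encodeTerm, if_true, one_ne_zero, if_false]
        rw [ih k _ (by omega)]
        rfl
      | R =>
        simp only [body, encodeTerm, if_true, if_false, OfNat.ofNat_ne_zero, OfNat.ofNat_ne_one]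
        rw [ih k _ (by omega)]
        rfl
      | comp a b =>
        have hp := Nat.add_le_pair (encodeTerm a) (encodeTerm b)
        simp only [encodeTerm] at h
        have h1 : body (encodeTerm (comp a b)) (k.map encodeTerm) w =
            some ((a :: b :: k).map encodeTerm, w) := by
          have e1 : (2 * Nat.pair (encodeTerm a) (encodeTerm b) + 3 - 3) % 2 = 0 := by omega
          have e2 : (2 * Nat.pair (encodeTerm a) (encodeTerm b) + 3 - 3) / 2 =
            Nat.pair (encodeTerm a) (encodeTerm b) := by omega
          simp only [body, encodeTerm, e1, e2]
          simp
        rw [h1, ih]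
        · simp [actL, act, Option.bind_assoc]
        · simp only [List.map_cons, List.sum_cons, Nat.succ_eq_add_one]
          omega
      | pair a b =>
        have hp := Nat.add_le_pair (encodeTerm a) (encodeTerm b)
        simp only [encodeTerm] at h
        have h1 : body (encodeTerm (pair a b)) (k.map encodeTerm) w =
            w.head?.map fun d =>
              (cond d (encodeTerm b) (encodeTerm a) :: k.map encodeTerm, w.tail) := by
          have e1 : (2 * Nat.pair (encodeTerm a) (encodeTerm b) + 4 - 3) % 2 = 1 := by omega
          have e2 : (2 * Nat.pair (encodeTerm a) (encodeTerm b) + 4 - 3) / 2 =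
            Nat.pair (encodeTerm a) (encodeTerm b) := by omega
          simp only [body, encodeTerm, e1, e2]
          simp
        rw [h1]
        rcases w with _ | ⟨_ | _, w⟩
        · simp [actL, act, iter_none]
        · have := ih (a :: k) w (by
            simp only [List.map_cons, List.sum_cons, Nat.succ_eq_add_one]; omega)
          exact this
        · have := ih (b :: k) w (by
            simp only [List.map_cons, List.sum_cons, Nat.succ_eq_add_one]; omega)
          exact this

theorem ev_spec (t : Term) (w : List Bool) : ev (encodeTerm t) w = act t w := by
  have := run_spec (encodeTerm t + 1) [t] w (by simp)
  simp only [List.map_cons, List.map_nil] at this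
  rw [ev, this]
  simp only [actL]
  cases act t w <;> simp

/-- Iterated evaluation. -/
def evL (l : List ℕ) (w : List Bool) : Option (List Bool) :=
  l.foldl (fun o c => o.bind (ev c)) (some w)

theorem evL_spec (l : List Term) (w : List Bool) : evL (l.map encodeTerm) w = actL l w := by
  have hn : ∀ l : List ℕ, l.foldl (fun o c => o.bind (ev c)) none = none := by
    intro l
    induction l with
    | nil => rfl
    | cons c l ih => simpa using ih
  induction l generalizing w with
  | nil => rfl
  | cons t l ih =>
    simp only [evL, List.map_cons, List.foldl_cons, Option.bind_some, ev_spec, actL]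
    rcases act t w with _ | q
    · exact hn _
    · exact ih q

theorem enc_surj (n : ℕ) : ∃ t, encodeTerm t = n := by
  induction n using Nat.strong_induction_on with
  | _ n ih =>
    by_cases h0 : n = 0
    · exact ⟨I, h0.symm⟩
    by_cases h1 : n = 1
    · exact ⟨L, h1.symm⟩
    by_cases h2 : n = 2
    · exact ⟨R, h2.symm⟩
    have ha := Nat.unpair_left_le ((n - 3) / 2)
    have hb := Nat.unpair_right_le ((n - 3) / 2)
    obtain ⟨a, ea⟩ := ih ((n - 3) / 2).unpair.1 (by omega)
    obtain ⟨b, eb⟩ := ih ((n - 3) / 2).unpair.2 (by omega)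
    by_cases h : (n - 3) % 2 = 0
    · refine ⟨comp a b, ?_⟩
      simp only [encodeTerm, ea, eb, Nat.pair_unpair]
      omega
    · refine ⟨pair a b, ?_⟩
      simp only [encodeTerm, ea, eb, Nat.pair_unpair]
      omega

theorem enc_list_surj (l : List ℕ) : ∃ B : List Term, B.map encodeTerm = l := by
  induction l with
  | nil => exact ⟨[], rfl⟩
  | cons n l ih =>
    obtain ⟨B, rfl⟩ := ih
    obtain ⟨t, rfl⟩ := enc_surj n
    exact ⟨t :: B, rfl⟩

theorem enc_inj : Function.Injective encodeTerm := by
  intro s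
  induction s with
  | I => intro t h; cases t <;> simp [encodeTerm] at h ⊢
  | L => intro t h; cases t <;> simp [encodeTerm] at h ⊢
  | R => intro t h; cases t <;> simp [encodeTerm] at h ⊢
  | comp a b iha ihb =>
    intro t h
    cases t <;> simp only [encodeTerm] at h <;> try omega
    have := Nat.pair_eq_pair.1 (show Nat.pair _ _ = Nat.pair _ _ by
      exact Nat.eq_of_mul_eq_mul_left (by norm_num : 0 < 2) (Nat.add_right_cancel h))
    rw [iha this.1, ihb this.2]
  | pair a b iha ihb =>
    intro t h
    cases t <;> simp only [encodeTerm] at h <;> try omega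
    have := Nat.pair_eq_pair.1 (show Nat.pair _ _ = Nat.pair _ _ by
      exact Nat.eq_of_mul_eq_mul_left (by norm_num : 0 < 2) (Nat.add_right_cancel h))
    rw [iha this.1, ihb this.2]

theorem encodeTermList_eq (B : List Term) :
    encodeTermList B = Encodable.encode (B.map encodeTerm) := by
  induction B with
  | nil => rfl
  | cons t B ih => simp [encodeTermList, ih]

/-- Numerical form of the certificate for badness. -/
def Chk1 (a : List ℕ × ℕ) (c : ℕ × ℕ × ℕ × List ℕ) : Prop :=
  (c.2.2.1 < c.2.1 + 1 ∧ (ev a.2 [] ≠ none ∧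
    acc c.2.2.2 (st c.2.1 c.2.2.2 c.2.2.1 ((ev a.2 []).getD [])))) ∧
  ∀ F ∈ a.1, ∀ p ∈ words c.1,
    (ev F p = none ∧ ¬ acc c.2.2.2 (st c.2.1 c.2.2.2 c.2.2.1 p) ∧ p.length < c.1) ∨
    (ev F p ≠ none ∧ ∀ x < c.2.1 + 1, ¬ acc c.2.2.2 (st c.2.1 c.2.2.2 x p) ∨
      acc c.2.2.2 (st c.2.1 c.2.2.2 x ((ev F p).getD [])))

theorem chk1_iff (B : List Term) (S : Term) (c : ℕ × ℕ × ℕ × List ℕ) :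
    Chk1 (B.map encodeTerm, encodeTerm S) c ↔ Cert B S c.1 c.2.1 c.2.2.1 c.2.2.2 := by
  unfold Chk1 Cert
  simp only [ev_spec, List.forall_mem_map, and_assoc, Nat.lt_succ_iff]
  refine and_congr Iff.rfl ?_
  rw [← and_assoc]
  refine and_congr ?_ ?_
  · cases act S [] <;> simp
  · refine forall_congr' fun F => forall_congr' fun _ => forall_congr' fun p =>
      forall_congr' fun _ => ?_
    cases act F p <;> simp [imp_iff_not_or]

/-- Numerical form of the certificate for non-badness. -/
def Chk2 (a : List ℕ × ℕ) (l : List ℕ) : Prop :=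
  (∀ c ∈ l, c ∈ a.1) ∧ evL (a.2 :: l) [] = none

theorem not_bad_iff (B : List Term) (S : Term) :
    ¬ BadFor B S ↔ ∃ l, Chk2 (B.map encodeTerm, encodeTerm S) l := by
  rw [badFor_iff]
  push Not
  constructor
  · rintro ⟨l, hl, h⟩
    refine ⟨l.map encodeTerm, ?_, ?_⟩
    · simp only [List.forall_mem_map]
      exact fun t ht => List.mem_map_of_mem (hl t ht)
    · exact (evL_spec (S :: l) []).trans h
  · rintro ⟨l, hl, h⟩
    obtain ⟨T, rfl⟩ := enc_list_surj l
    refine ⟨T, ?_, ?_⟩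
    · intro t ht
      have := hl _ (List.mem_map_of_mem ht)
      obtain ⟨s, hs, e⟩ := List.mem_map.1 this
      rw [← enc_inj e]
      exact hs
    · rw [← evL_spec]
      exact h

/-! ### Primitive recursiveness -/

theorem body_prim : Primrec fun x : ℕ × List ℕ × List Bool => body x.1 x.2.1 x.2.2 := by
  have hc : Primrec fun x : ℕ × List ℕ × List Bool => x.1 := Primrec.fst
  have hk : Primrec fun x : ℕ × List ℕ × List Bool => x.2.1 := Primrec.fst.comp Primrec.snd
  have hw : Primrec fun x : ℕ × List ℕ × List Bool => x.2.2 := Primrec.snd.comp Primrec.snd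
  have hd : Primrec fun x : ℕ × List ℕ × List Bool => x.1 - 3 :=
    Primrec.nat_sub.comp hc (Primrec.const 3)
  have hu : Primrec fun x : ℕ × List ℕ × List Bool => ((x.1 - 3) / 2).unpair :=
    Primrec.unpair.comp (Primrec.nat_div.comp hd (Primrec.const 2))
  have ha := Primrec.fst.comp hu
  have hb := Primrec.snd.comp hu
  unfold body
  refine Primrec.ite (Primrec.eq.comp hc (Primrec.const 0))
    (Primrec.option_some.comp (Primrec.pair hk hw)) ?_
  refine Primrec.ite (Primrec.eq.comp hc (Primrec.const 1))
    (Primrec.option_some.comp (Primrec.pair hk (Primrec.list_cons.comp (Primrec.const _) hw))) ?_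
  refine Primrec.ite (Primrec.eq.comp hc (Primrec.const 2))
    (Primrec.option_some.comp (Primrec.pair hk (Primrec.list_cons.comp (Primrec.const _) hw))) ?_
  refine Primrec.ite (Primrec.eq.comp (Primrec.nat_mod.comp hd (Primrec.const 2))
    (Primrec.const 0)) (Primrec.option_some.comp (Primrec.pair
      (Primrec.list_cons.comp ha (Primrec.list_cons.comp hb hk)) hw)) ?_
  refine Primrec.option_map (Primrec.list_head?.comp hw) ?_
  refine Primrec.pair (Primrec.list_cons.comp (Primrec.cond Primrec.snd
    (hb.comp Primrec.fst) (ha.comp Primrec.fst)) (hk.comp Primrec.fst))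
    (Primrec.list_tail.comp (hw.comp Primrec.fst))

theorem stepC_prim : Primrec stepC := by
  unfold stepC
  refine Primrec.list_casesOn (f := fun c : List ℕ × List Bool => c.1)
    (h := fun (c : List ℕ × List Bool) (z : ℕ × List ℕ) => body z.1 z.2 c.2)
    Primrec.fst Primrec.option_some ?_
  refine body_prim.comp (Primrec.pair (Primrec.fst.comp Primrec.snd)
    (Primrec.pair (Primrec.snd.comp Primrec.snd) (Primrec.snd.comp Primrec.fst)))

theorem ev_prim : Primrec₂ ev := by
  refine Primrec.option_map ?_ (Primrec.snd.comp (Primrec.snd (α := ℕ × List Bool) (β := List ℕ × List Bool))).to₂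
  refine Primrec.nat_iterate (Primrec.succ.comp Primrec.fst)
    (Primrec.option_some.comp (Primrec.pair
      (Primrec.list_cons.comp Primrec.fst (Primrec.const [])) Primrec.snd)) ?_
  exact Primrec.option_bind Primrec.snd (stepC_prim.comp Primrec.snd)

theorem evL_prim : Primrec₂ evL := by
  refine Primrec.list_foldl (h := fun (_ : List ℕ × List Bool)
    (z : Option (List Bool) × ℕ) => z.1.bind (ev z.2))
    Primrec.fst (Primrec.option_some.comp Primrec.snd) ?_
  exact Primrec.option_bind (Primrec.fst.comp Primrec.snd)
    (ev_prim.comp (Primrec.snd.comp (Primrec.snd.comp Primrec.fst)) Primrec.snd)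

theorem words_prim : Primrec words := by
  have h : Primrec (Nat.rec [[]] fun (_ : ℕ) (W : List (List Bool)) =>
      [] :: W.flatMap fun w => [false :: w, true :: w] : ℕ → List (List Bool)) := by
    refine Primrec.nat_rec₁ _ ?_
    refine Primrec.list_cons.comp (Primrec.const []) (Primrec.list_flatMap Primrec.snd ?_)
    exact Primrec.list_cons.comp (Primrec.list_cons.comp (Primrec.const _) Primrec.snd)
      (Primrec.list_cons.comp (Primrec.list_cons.comp (Primrec.const _) Primrec.snd)
        (Primrec.const []))
  refine h.of_eq fun n => ?_
  induction n with
  | zero => rfl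
  | succ n ih => simp only [words, ← ih]

theorem st_prim {α : Type} [Primcodable α] {s x : α → ℕ} {t : α → List ℕ} {w : α → List Bool}
    (hs : Primrec s) (ht : Primrec t) (hx : Primrec x) (hw : Primrec w) :
    Primrec fun a => st (s a) (t a) (x a) (w a) := by
  unfold st
  refine Primrec.list_foldr (h := fun a (z : Bool × ℕ) => del (s a) (t a) z.2 z.1) hw hx ?_
  unfold del
  refine Primrec.nat_mod.comp ?_ (Primrec.succ.comp (hs.comp Primrec.fst))
  refine (Primrec.list_getD 0).comp (ht.comp Primrec.fst) ?_
  refine Primrec.nat_add.comp (Primrec.nat_mul.comp (Primrec.const 3)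
    (Primrec.snd.comp Primrec.snd)) ?_
  exact Primrec.cond (Primrec.fst.comp Primrec.snd) (Primrec.const 1) (Primrec.const 0)

theorem acc_prim {α : Type} [Primcodable α] {s x : α → ℕ} {t : α → List ℕ} {w : α → List Bool}
    (hs : Primrec s) (ht : Primrec t) (hx : Primrec x) (hw : Primrec w) :
    PrimrecPred fun a => acc (t a) (st (s a) (t a) (x a) (w a)) := by
  unfold acc
  refine Primrec.eq.comp ((Primrec.list_getD 0).comp ht ?_) (Primrec.const 1)
  exact Primrec.nat_add.comp (Primrec.nat_mul.comp (Primrec.const 3) (st_prim hs ht hx hw))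
    (Primrec.const 2)

theorem chk1_prim : PrimrecRel Chk1 := by
  -- the innermost quantifier
  have h1 : PrimrecRel fun (x : ℕ) (y : (List Bool × ℕ) × (ℕ × ℕ × ℕ × List ℕ)) =>
      ¬ acc y.2.2.2.2 (st y.2.2.1 y.2.2.2.2 x y.1.1) ∨
      acc y.2.2.2.2 (st y.2.2.1 y.2.2.2.2 x ((ev y.1.2 y.1.1).getD [])) := by
    have hy : Primrec fun z : ℕ × ((List Bool × ℕ) × (ℕ × ℕ × ℕ × List ℕ)) => z.2 := Primrec.snd
    have hc := Primrec.snd.comp hy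
    have hs := Primrec.fst.comp (Primrec.snd.comp hc)
    have ht := Primrec.snd.comp (Primrec.snd.comp (Primrec.snd.comp hc))
    have hp := Primrec.fst.comp (Primrec.fst.comp hy)
    have hF := Primrec.snd.comp (Primrec.fst.comp hy)
    refine PrimrecPred.or (PrimrecPred.not (acc_prim hs ht Primrec.fst hp))
      (acc_prim hs ht Primrec.fst ?_)
    exact Primrec.option_getD.comp (ev_prim.comp hF hp) (Primrec.const [])
  have h2 : PrimrecRel fun (p : List Bool) (y : ℕ × (ℕ × ℕ × ℕ × List ℕ)) =>
      (ev y.1 p = none ∧ ¬ acc y.2.2.2.2 (st y.2.2.1 y.2.2.2.2 y.2.2.2.1 p) ∧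
        p.length < y.2.1) ∨
      (ev y.1 p ≠ none ∧ ∀ x < y.2.2.1 + 1, ¬ acc y.2.2.2.2 (st y.2.2.1 y.2.2.2.2 x p) ∨
        acc y.2.2.2.2 (st y.2.2.1 y.2.2.2.2 x ((ev y.1 p).getD []))) := by
    have hp : Primrec fun z : List Bool × (ℕ × (ℕ × ℕ × ℕ × List ℕ)) => z.1 := Primrec.fst
    have hF : Primrec fun z : List Bool × (ℕ × (ℕ × ℕ × ℕ × List ℕ)) => z.2.1 :=
      Primrec.fst.comp Primrec.snd
    have hc : Primrec fun z : List Bool × (ℕ × (ℕ × ℕ × ℕ × List ℕ)) => z.2.2 :=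
      Primrec.snd.comp Primrec.snd
    have hm := Primrec.fst.comp hc
    have hs := Primrec.fst.comp (Primrec.snd.comp hc)
    have hx := Primrec.fst.comp (Primrec.snd.comp (Primrec.snd.comp hc))
    have ht := Primrec.snd.comp (Primrec.snd.comp (Primrec.snd.comp hc))
    have he : PrimrecPred fun z : List Bool × (ℕ × (ℕ × ℕ × ℕ × List ℕ)) =>
        ev z.2.1 z.1 = none := Primrec.eq.comp (ev_prim.comp hF hp) (Primrec.const none)
    refine PrimrecPred.or (he.and ((acc_prim hs ht hx hp).not.and
      (Primrec.nat_lt.comp (Primrec.list_length.comp hp) hm))) (he.not.and ?_)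
    have h1' := PrimrecRel.forall_mem_list h1
    refine (h1'.comp (Primrec.list_range.comp (Primrec.succ.comp hs))
      (Primrec.pair (Primrec.pair hp hF) hc)).of_eq fun z => ?_
    simp only [List.mem_range, Nat.succ_eq_add_one]
  have h3 : PrimrecRel fun (F : ℕ) (c : ℕ × ℕ × ℕ × List ℕ) => ∀ p ∈ words c.1,
      (ev F p = none ∧ ¬ acc c.2.2.2 (st c.2.1 c.2.2.2 c.2.2.1 p) ∧ p.length < c.1) ∨
      (ev F p ≠ none ∧ ∀ x < c.2.1 + 1, ¬ acc c.2.2.2 (st c.2.1 c.2.2.2 x p) ∨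
        acc c.2.2.2 (st c.2.1 c.2.2.2 x ((ev F p).getD []))) :=
    h2.forall_mem_list.comp (words_prim.comp (Primrec.fst.comp Primrec.snd)) Primrec.id
  have ha : Primrec fun z : (List ℕ × ℕ) × (ℕ × ℕ × ℕ × List ℕ) => z.1.2 :=
    Primrec.snd.comp Primrec.fst
  have hc : Primrec fun z : (List ℕ × ℕ) × (ℕ × ℕ × ℕ × List ℕ) => z.2 := Primrec.snd
  have hs := Primrec.fst.comp (Primrec.snd.comp hc)
  have hx := Primrec.fst.comp (Primrec.snd.comp (Primrec.snd.comp hc))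
  have ht := Primrec.snd.comp (Primrec.snd.comp (Primrec.snd.comp hc))
  have he := ev_prim.comp ha (Primrec.const [])
  refine PrimrecPred.and (PrimrecPred.and (Primrec.nat_lt.comp hx (Primrec.succ.comp hs))
    (PrimrecPred.and (PrimrecPred.not (Primrec.eq.comp he (Primrec.const none)))
      (acc_prim hs ht hx (Primrec.option_getD.comp he (Primrec.const []))))) ?_
  exact h3.forall_mem_list.comp (Primrec.fst.comp Primrec.fst) hc

theorem chk2_prim : PrimrecRel Chk2 := by
  have h1 : PrimrecRel fun (c : ℕ) (l : List ℕ) => c ∈ l := by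
    have h0 : PrimrecRel fun (l : List ℕ) (c : ℕ) => ∃ d ∈ l, d = c :=
      PrimrecRel.exists_mem_list Primrec.eq
    exact (h0.comp Primrec.snd Primrec.fst).of_eq fun z => by simp
  refine PrimrecPred.and
    (h1.forall_mem_list.comp Primrec.snd (Primrec.fst.comp Primrec.fst)) ?_
  exact Primrec.eq.comp (evL_prim.comp
    (Primrec.list_cons.comp (Primrec.snd.comp Primrec.fst) Primrec.snd) (Primrec.const []))
    (Primrec.const none)

/-- Generic search: a predicate with primitive recursive certificates on both sides. -/
theorem decide_of_certs {α β γ : Type} [Primcodable α] [Primcodable β] [Primcodable γ]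
    {p : α → Prop} {c1 : α → β → Prop} {c2 : α → γ → Prop}
    (h1 : PrimrecRel c1) (h2 : PrimrecRel c2)
    (hp : ∀ a, p a ↔ ∃ b, c1 a b) (hn : ∀ a, ¬ p a ↔ ∃ b, c2 a b) :
    ∃ f : α → Bool, Computable f ∧ ∀ a, f a = true ↔ p a := by
  classical
  let g : α → ℕ → Option Bool := fun a k =>
    ((Encodable.decode k : Option (β ⊕ γ))).bind fun x =>
      Sum.casesOn x (fun b => if c1 a b then some true else none)
        (fun b => if c2 a b then some false else none)
  have hg : Computable₂ g := by
    refine Primrec₂.to_comp ?_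
    refine Primrec.option_bind (Primrec.decode.comp Primrec.snd) ?_
    refine Primrec.sumCasesOn Primrec.snd ?_ ?_
    · exact Primrec.ite (h1.comp (Primrec.fst.comp (Primrec.fst.comp Primrec.fst)) Primrec.snd)
        (Primrec.const _) (Primrec.const _)
    · exact Primrec.ite (h2.comp (Primrec.fst.comp (Primrec.fst.comp Primrec.fst)) Primrec.snd)
        (Primrec.const _) (Primrec.const _)
  have hsound : ∀ a k r, g a k = some r → (r = true ↔ p a) := by
    intro a k r h
    simp only [g, Option.bind_eq_some_iff] at h
    obtain ⟨x, _, h⟩ := h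
    rcases x with b | b
    · by_cases hc : c1 a b
      · simp only [hc, if_true, Option.some.injEq] at h
        subst h
        simpa using (hp a).2 ⟨b, hc⟩
      · simp [hc] at h
    · by_cases hc : c2 a b
      · simp only [hc, if_true, Option.some.injEq] at h
        subst h
        simpa using (hn a).2 ⟨b, hc⟩
      · simp [hc] at h
  have htot : ∀ a, (Nat.rfindOpt (g a)).Dom := by
    intro a
    rw [Nat.rfindOpt_dom]
    by_cases h : p a
    · obtain ⟨b, hb⟩ := (hp a).1 h
      exact ⟨Encodable.encode (Sum.inl b : β ⊕ γ), true, by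
        simp only [g, Encodable.encodek]; simp [hb]⟩
    · obtain ⟨b, hb⟩ := (hn a).1 h
      exact ⟨Encodable.encode (Sum.inr b : β ⊕ γ), false, by
        simp only [g, Encodable.encodek]; simp [hb]⟩
  refine ⟨fun a => (Nat.rfindOpt (g a)).get (htot a), ?_, ?_⟩
  · refine (Partrec.rfindOpt hg).of_eq fun a => ?_
    exact (Part.some_get (htot a)).symm
  · intro a
    obtain ⟨k, hk⟩ := Nat.rfindOpt_spec (Part.get_mem (htot a))
    exact hsound a k _ hk

end BadShift

/-- The set of bad shifts is recursive uniformly in `B`: there is an algorithm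
deciding, given a finite set `B` of terms in CQ normal form and a shift `S`,
whether `S` is bad for `B`. -/
theorem bad_shift_decidable :
    ∃ f : ℕ → Bool, Computable f ∧
      ∀ (B : List Term) (S : Term), (∀ t ∈ B, NF rules15 t) → IsShift S →
        (f (Nat.pair (encodeTermList B) (encodeTerm S)) = true ↔ BadFor B S) := by
  obtain ⟨f, hf, hspec⟩ := BadShift.decide_of_certs
    (p := fun a : List ℕ × ℕ => ∃ c, BadShift.Chk1 a c)
    BadShift.chk1_prim BadShift.chk2_prim (fun _ => Iff.rfl) (by
      rintro ⟨bc, sc⟩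
      obtain ⟨B, rfl⟩ := BadShift.enc_list_surj bc
      obtain ⟨S, rfl⟩ := BadShift.enc_surj sc
      rw [← BadShift.not_bad_iff]
      refine not_congr ⟨?_, ?_⟩
      · rintro ⟨c, hc⟩
        exact BadShift.cert_sound ((BadShift.chk1_iff B S c).1 hc)
      · intro h
        obtain ⟨m, s, x0, t, hc⟩ := BadShift.cert_complete h
        exact ⟨(m, s, x0, t), (BadShift.chk1_iff B S _).2 hc⟩)
  refine ⟨fun n => f ((Encodable.decode (α := List ℕ × ℕ) n).getD ([], 0)), ?_, ?_⟩
  · exact hf.comp (Primrec.option_getD.comp Primrec.decode (Primrec.const _)).to_comp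
  · intro B S _ _
    have he : Nat.pair (encodeTermList B) (encodeTerm S) =
        Encodable.encode (B.map encodeTerm, encodeTerm S) := by
      rw [BadShift.encodeTermList_eq]
      rfl
    simp only [he, Encodable.encodek, Option.getD_some]
    rw [hspec]
    constructor
    · rintro ⟨c, hc⟩
      exact BadShift.cert_sound ((BadShift.chk1_iff B S c).1 hc)
    · intro h
      obtain ⟨m, s, x0, t, hc⟩ := BadShift.cert_complete h
      exact ⟨(m, s, x0, t), (BadShift.chk1_iff B S _).2 hc⟩
end
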